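/- For all positive integers n and t, the anti-Ramsey number of t edge-disjoint rainbow spanning trees in the complete graph K_n satisfies: r(K_n,t) = C(n-2,2) + t if n ≥ 2t+2; r(K_n,t) = C(n-1,2) if n = 2t+1; r(K_n,t) = C(n,2) - t if n = 2t; and r(K_n,t) = C(n,2) if n < 2t. Here C(a,2) denotes the binomial coefficient a choose 2. -/

import Mathlib

open Finset
open scoped Classical

/-- The set of non-crossing edges of `G` with respect to a partition `P` of the
vertex set: edges whose two endpoints lie in the same part of `P`. -/
noncomputable def edgesNonCrossing {V : Type} [Fintype V] (G : SimpleGraph V)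
    (P : Finpartition (Finset.univ : Finset V)) : Finset (Sym2 V) :=
  G.edgeFinset.filter (fun e => ∃ p ∈ P.parts, ∀ v ∈ e, v ∈ p)

/-- The set of crossing edges of `G` with respect to a partition `P` of the
vertex set: edges whose endpoints lie in different parts of `P`. -/
noncomputable def edgesCrossing {V : Type} [Fintype V] (G : SimpleGraph V)
    (P : Finpartition (Finset.univ : Finset V)) : Finset (Sym2 V) :=
  G.edgeFinset.filter (fun e => ¬ ∃ p ∈ P.parts, ∀ v ∈ e, v ∈ p)

/-- `G`, edge-colored by `c`, contains `t` pairwise edge-disjoint rainbow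
spanning trees. -/
def HasRainbowSpanningTrees {V : Type} [Fintype V] (G : SimpleGraph V)
    (c : Sym2 V → ℕ) (t : ℕ) : Prop :=
  ∃ T : Fin t → SimpleGraph V,
    (∀ i, T i ≤ G) ∧ (∀ i, (T i).IsTree) ∧
    (∀ i, Set.InjOn c ((T i).edgeSet)) ∧
    (∀ i j, i ≠ j → Disjoint ((T i).edgeSet) ((T j).edgeSet))

/-- The anti-Ramsey number `r(G,t)`: the maximum number of colors in an
edge-coloring of `G` containing no `t` pairwise edge-disjoint rainbow spanning
trees. -/
noncomputable def antiRamsey {V : Type} [Fintype V] (G : SimpleGraph V) (t : ℕ) : ℕ :=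
  sSup {m | ∃ c : Sym2 V → ℕ, (G.edgeFinset.image c).card = m ∧
    ¬ HasRainbowSpanningTrees G c t}

/-- `max_{P : |P| ≥ 3} { |E(P,G)| + t(|P|-2) }`. -/
noncomputable def maxNonCross3 {V : Type} [Fintype V] (G : SimpleGraph V) (t : ℕ) : ℕ :=
  sSup {m | ∃ P : Finpartition (Finset.univ : Finset V), 3 ≤ P.parts.card ∧
    m = (edgesNonCrossing G P).card + t * (P.parts.card - 2)}

/-- `f_G(s)`: the maximum of `|E(P,G)|` over partitions of the vertex set into
exactly `s` parts. -/
noncomputable def fMax {V : Type} [Fintype V] (G : SimpleGraph V) (s : ℕ) : ℕ :=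
  sSup {m | ∃ P : Finpartition (Finset.univ : Finset V), P.parts.card = s ∧
    m = (edgesNonCrossing G P).card}

/-- The number of edges of `G` induced by a set `p` of vertices. -/
noncomputable def edgesWithin {V : Type} [Fintype V] (G : SimpleGraph V) (p : Finset V) : ℕ :=
  (G.edgeFinset.filter (fun e => ∀ v ∈ e, v ∈ p)).card

/-- One splitting step: remove a single vertex from a currently largest part
(measured by the number of non-crossing edges it induces) to form a new
singleton part. -/
def SplitStep {V : Type} [Fintype V] (G : SimpleGraph V)
    (P Q : Finpartition (Finset.univ : Finset V)) : Prop :=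
  ∃ p ∈ P.parts, (∀ q ∈ P.parts, edgesWithin G q ≤ edgesWithin G p) ∧
    ∃ v ∈ p, p.erase v ≠ ∅ ∧
      Q.parts = insert {v} (insert (p.erase v) (P.parts.erase p))

/-!
Lower bound. For a partition into `s` parts, give distinct colors to the noncrossing edges and to
`t (s - 2) - 1` crossing edges, and one further color to everything else. A rainbow spanning tree
has at least `s - 1` crossing edges, of which at most one has the last color, so `t` disjoint ones
would need `t (s - 2)` of the distinctly colored crossing edges. The partition into two singletons
and the rest gives `(n - 2).choose 2 + t`, the partition into singletons gives `t (n - 2)`.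

Upper bound. Let `M` be the larger of these two numbers. Among more than `M` colors one finds a set
`H` of `M + t` edges with at least `M + 1` colors and, after exchanging edges, minimum degree at
least `t` if `2 t < n`. The set `R` of edges of `H` whose color is repeated has at most `2 t - 2`
elements. Distribute `R` over `t` bins, at most two edges of distinct colors in each, and let the
edges of `H \ R` be available to all bins. By matroid union the bins extend to disjoint rainbow
spanning trees as soon as, for every partition into `s` parts, the number of crossing edges of `H`
is at least `t (s - 1)` plus the number of bins whose two edges become parallel when the parts are
contracted. Counting gives this except for partitions that isolate one or two vertices. There a
vertex is endangered only if many of its edges lie in `R`; at most two vertices are, and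
the bins are chosen so that the edges of `R` at these two collide as little as possible.
-/

section MatroidUnion

variable {α ι : Type*} [DecidableEq α]

/-- Submodularity of a function on finite sets, the axiom that makes a rank function matroidal. -/
def IsSubmodular (ρ : Finset α → ℕ) : Prop :=
  ∀ X Y, ρ (X ∪ Y) + ρ (X ∩ Y) ≤ ρ X + ρ Y

/-- The rank condition of the matroid union theorem: `A i` is the set of elements available to the
rank function `r i`, and the ranks of disjoint subsets of the `A i` are to add up to `K`. -/
def UnionRankCondition [Fintype α] [Fintype ι] (r : ι → Finset α → ℕ) (A : ι → Finset α)
    (K : ℕ) : Prop :=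
  ∀ X : Finset α, K ≤ #Xᶜ + ∑ i, r i (A i ∩ X)

/-- The family `A` with the element `e` removed from its `i`-th member. -/
def eraseAt [DecidableEq ι] (A : ι → Finset α) (i : ι) (e : α) : ι → Finset α :=
  fun l => {x ∈ A l | l = i → x ≠ e}

lemma mem_eraseAt [DecidableEq ι] {A : ι → Finset α} {i l : ι} {e x : α} :
    x ∈ eraseAt A i e l ↔ x ∈ A l ∧ (l = i → x ≠ e) := by
  simp only [eraseAt, mem_filter]

lemma eraseAt_subset [DecidableEq ι] (A : ι → Finset α) (i : ι) (e : α) (l : ι) :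
    eraseAt A i e l ⊆ A l :=
  filter_subset _ _

lemma card_compl_union_add_card_compl_inter_erase [Fintype α] {X Y : Finset α} {e : α} (hX : e ∈ X)
    (hY : e ∈ Y) : #(X ∪ Y)ᶜ + #((X ∩ Y).erase e)ᶜ = #Xᶜ + #Yᶜ + 1 := by
  have hXc := card_add_card_compl X
  have hYc := card_add_card_compl Y
  have hUc := card_add_card_compl (X ∪ Y)
  have hIc := card_add_card_compl ((X ∩ Y).erase e)
  have hUI := card_union_add_card_inter X Y
  have hI := card_erase_add_one (mem_inter.2 ⟨hX, hY⟩)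
  lia

variable [Fintype ι] {r : ι → Finset α → ℕ} {A : ι → Finset α} {K : ℕ}

lemma sum_card_eraseAt_lt [DecidableEq ι] {i : ι} {e : α} (he : e ∈ A i) :
    ∑ l, #(eraseAt A i e l) < ∑ l, #(A l) := by
  refine sum_lt_sum (fun l _ => card_le_card (eraseAt_subset A i e l)) ⟨i, mem_univ i, ?_⟩
  refine card_lt_card ((ssubset_iff_of_subset (eraseAt_subset A i e i)).2 ⟨e, he, fun h => ?_⟩)
  exact (mem_eraseAt.1 h).2 rfl rfl

variable [Fintype α]

lemma UnionRankCondition.mem_of_eraseAt_lt [DecidableEq ι] {X : Finset α} {i : ι} {e : α}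
    (hA : UnionRankCondition r A K) (hX : #Xᶜ + ∑ l, r l (eraseAt A i e l ∩ X) < K) :
    e ∈ X := by
  by_contra he
  have hinter : ∀ l, eraseAt A i e l ∩ X = A l ∩ X := fun l => by
    ext x
    simp only [mem_inter, mem_eraseAt]
    exact ⟨fun h => ⟨h.1.1, h.2⟩, fun h => ⟨⟨h.1, fun _ hx => he (hx ▸ h.2)⟩, h.2⟩⟩
  simp only [hinter] at hX
  exact (hA X).not_gt hX

-- Violating sets `X` and `Y` for the two erasures would be uncrossed into `X ∪ Y` and
-- `(X ∩ Y).erase e`, one of which violates the condition for `A` itself.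
lemma UnionRankCondition.eraseAt_or [DecidableEq ι] (hmono : ∀ i, Monotone (r i))
    (hsub : ∀ i, IsSubmodular (r i)) (hA : UnionRankCondition r A K) {i j : ι} (hij : i ≠ j)
    (e : α) :
    UnionRankCondition r (eraseAt A i e) K ∨ UnionRankCondition r (eraseAt A j e) K := by
  by_contra! h
  simp only [UnionRankCondition, not_forall, not_le] at h
  obtain ⟨⟨X, hX⟩, Y, hY⟩ := h
  have heX : e ∈ X := hA.mem_of_eraseAt_lt hX
  have heY : e ∈ Y := hA.mem_of_eraseAt_lt hY
  have huncross : ∑ l, r l (A l ∩ (X ∪ Y)) + ∑ l, r l (A l ∩ (X ∩ Y).erase e) ≤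
      ∑ l, r l (eraseAt A i e l ∩ X) + ∑ l, r l (eraseAt A j e l ∩ Y) := by
    rw [← sum_add_distrib, ← sum_add_distrib]
    refine sum_le_sum fun l _ =>
      (add_le_add (hmono l fun x hx => ?_) (hmono l fun x hx => ?_)).trans (hsub l _ _)
    · by_cases hxe : x = e <;> by_cases hl : l = i <;>
        simp_all only [mem_inter, mem_union, mem_eraseAt] <;> grind
    · simp_all only [mem_inter, mem_erase, mem_eraseAt]
      grind
  have hunion := hA (X ∪ Y)
  have hinter := hA ((X ∩ Y).erase e)
  have hcard := card_compl_union_add_card_compl_inter_erase heX heY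
  lia

theorem UnionRankCondition.exists_pairwise_disjoint (hmono : ∀ i, Monotone (r i))
    (hsub : ∀ i, IsSubmodular (r i)) (hA : UnionRankCondition r A K) :
    ∃ B : ι → Finset α, (∀ i, B i ⊆ A i) ∧ Pairwise (Function.onFun Disjoint B) ∧
      K ≤ ∑ i, r i (B i) := by
  induction hk : ∑ i, #(A i) using Nat.strong_induction_on generalizing A with
  | _ k ih =>
  subst hk
  by_cases hdisj : Pairwise (Function.onFun Disjoint A)
  · refine ⟨A, fun i => subset_rfl, hdisj, ?_⟩
    simpa only [compl_univ, card_empty, zero_add, inter_univ] using hA univ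
  simp only [Pairwise, Function.onFun, not_forall, not_disjoint_iff] at hdisj
  obtain ⟨i, j, hij, e, hi, hj⟩ := hdisj
  have hshrink : ∃ l, e ∈ A l ∧ UnionRankCondition r (eraseAt A l e) K :=
    (hA.eraseAt_or hmono hsub hij e).elim (fun h => ⟨i, hi, h⟩) fun h => ⟨j, hj, h⟩
  obtain ⟨l, hl, hAl⟩ := hshrink
  obtain ⟨B, hBA, hB, hK⟩ := ih _ (sum_card_eraseAt_lt hl) hAl rfl
  exact ⟨B, fun i => (hBA i).trans (eraseAt_subset A l e i), hB, hK⟩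

end MatroidUnion

section EdgeRank

variable {V κ : Type*} {X F : Finset (Sym2 V)} {p : V → κ} {e f : Sym2 V}

/-- The incidence vector of an edge over the field with two elements; a loop has the vector `0`. -/
noncomputable def edgeVec (e : Sym2 V) : V →₀ ZMod 2 :=
  Sym2.lift ⟨fun u v => Finsupp.single u 1 + Finsupp.single v 1, fun _ _ => add_comm _ _⟩ e

/-- The span of the incidence vectors of a set of edges. -/
noncomputable def edgeSpan (X : Finset (Sym2 V)) : Submodule (ZMod 2) (V →₀ ZMod 2) :=
  Submodule.span (ZMod 2) (edgeVec '' (X : Set (Sym2 V)))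

/-- The rank of a set of edges in the graphic matroid of the complete graph, computed in its binary
representation by incidence vectors. -/
noncomputable def edgeRank (X : Finset (Sym2 V)) : ℕ :=
  Module.finrank (ZMod 2) (edgeSpan X)

/-- The edges of `H` whose endpoints are separated by `p`. -/
noncomputable def crossing (H : Finset (Sym2 V)) (p : V → κ) : Finset (Sym2 V) :=
  {e ∈ H | ¬(Sym2.map p e).IsDiag}

/-- The edges of `H` whose endpoints are identified by `p`. -/
noncomputable def noncrossing (H : Finset (Sym2 V)) (p : V → κ) : Finset (Sym2 V) :=
  {e ∈ H | (Sym2.map p e).IsDiag}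

lemma mem_crossing : e ∈ crossing F p ↔ e ∈ F ∧ ¬(Sym2.map p e).IsDiag :=
  mem_filter

lemma mem_noncrossing : e ∈ noncrossing F p ↔ e ∈ F ∧ (Sym2.map p e).IsDiag :=
  mem_filter

lemma crossing_subset (F : Finset (Sym2 V)) (p : V → κ) : crossing F p ⊆ F :=
  filter_subset _ _

lemma card_noncrossing_add_card_crossing (H : Finset (Sym2 V)) (p : V → κ) :
    #(noncrossing H p) + #(crossing H p) = #H :=
  card_filter_add_card_filter_not _

lemma edgeVec_mk (u v : V) : edgeVec s(u, v) = Finsupp.single u 1 + Finsupp.single v 1 := rfl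

lemma edgeVec_eq_zero_of_isDiag (he : e.IsDiag) : edgeVec e = 0 := by
  induction e with
  | _ u v => rw [edgeVec_mk, Sym2.mk_isDiag_iff.1 he, ZModModule.add_self]

lemma edgeVec_apply (he : ¬e.IsDiag) (x : V) : edgeVec e x = if x ∈ e then 1 else 0 := by
  induction e with
  | _ u v =>
    rw [Sym2.mk_isDiag_iff] at he
    simp only [edgeVec_mk, Finsupp.add_apply, Finsupp.single_apply, Sym2.mem_iff]
    grind

lemma edgeVec_ne_zero (he : ¬e.IsDiag) : edgeVec e ≠ 0 := by
  intro h
  have hfst := DFunLike.congr_fun h (Quot.out e).1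
  rw [edgeVec_apply he, if_pos (Sym2.out_fst_mem e)] at hfst
  exact one_ne_zero hfst

lemma edgeVec_injOn_not_isDiag : Set.InjOn (edgeVec (V := V)) {e | ¬e.IsDiag} := by
  intro e he f hf hef
  refine Sym2.ext fun x => ?_
  have hx := DFunLike.congr_fun hef x
  rw [edgeVec_apply he, edgeVec_apply hf] at hx
  by_cases hxe : x ∈ e <;> by_cases hxf : x ∈ f <;> simp_all

lemma lmapDomain_edgeVec (p : V → κ) (e : Sym2 V) :
    Finsupp.lmapDomain (ZMod 2) (ZMod 2) p (edgeVec e) = edgeVec (Sym2.map p e) := by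
  induction e with
  | _ u v => simp only [Sym2.map_mk, edgeVec_mk, map_add, Finsupp.lmapDomain_apply,
      Finsupp.mapDomain_single]

lemma map_lmapDomain_edgeSpan [DecidableEq κ] (p : V → κ) (F : Finset (Sym2 V)) :
    (edgeSpan F).map (Finsupp.lmapDomain (ZMod 2) (ZMod 2) p) =
      edgeSpan (F.image (Sym2.map p)) := by
  simp only [edgeSpan, Submodule.map_span, coe_image, Set.image_image, lmapDomain_edgeVec]

lemma edgeSpan_mono : Monotone (edgeSpan (V := V)) := fun _ _ h =>
  Submodule.span_mono (Set.image_mono (coe_subset.2 h))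

lemma edgeSpan_le_ker_lmapDomain (hX : ∀ e ∈ X, (Sym2.map p e).IsDiag) :
    edgeSpan X ≤ LinearMap.ker (Finsupp.lmapDomain (ZMod 2) (ZMod 2) p) := by
  refine Submodule.span_le.2 ?_
  rintro _ ⟨e, he, rfl⟩
  rw [SetLike.mem_coe, LinearMap.mem_ker, lmapDomain_edgeVec]
  exact edgeVec_eq_zero_of_isDiag (hX e he)

lemma edgeRank_le_card (X : Finset (Sym2 V)) : edgeRank X ≤ #X := by
  have h := finrank_span_finset_le_card (R := ZMod 2) (X.image edgeVec)
  rw [coe_image] at h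
  exact h.trans card_image_le

instance (X : Finset (Sym2 V)) : Module.Finite (ZMod 2) (edgeSpan X) :=
  FiniteDimensional.span_of_finite _ (X.finite_toSet.image _)

instance (X : Finset (Sym2 V)) : Finite (edgeSpan X) := Module.finite_of_finite (ZMod 2)

lemma edgeRank_mono : Monotone (edgeRank (V := V)) := fun _ _ h =>
  Submodule.finrank_mono (edgeSpan_mono h)

lemma isSubmodular_edgeRank [DecidableEq V] : IsSubmodular (edgeRank (V := V)) := by
  intro X Y
  have hsup : edgeSpan (X ∪ Y) = edgeSpan X ⊔ edgeSpan Y := by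
    simp only [edgeSpan, coe_union, Set.image_union, Submodule.span_union]
  have hinf : edgeSpan (X ∩ Y) ≤ edgeSpan X ⊓ edgeSpan Y :=
    le_inf (edgeSpan_mono inter_subset_left) (edgeSpan_mono inter_subset_right)
  unfold edgeRank
  rw [← Submodule.finrank_sup_add_finrank_inf_eq (edgeSpan X) (edgeSpan Y), hsup]
  exact Nat.add_le_add_left (Submodule.finrank_mono hinf) _

lemma edgeRank_union_le [DecidableEq V] (X Y : Finset (Sym2 V)) :
    edgeRank (X ∪ Y) ≤ edgeRank X + #Y :=
  (Nat.le_add_right _ _).trans ((isSubmodular_edgeRank X Y).trans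
    (Nat.add_le_add_left (edgeRank_le_card Y) _))

lemma edgeRank_add_edgeRank_image_le [DecidableEq V] [DecidableEq κ]
    (hX : ∀ e ∈ X, (Sym2.map p e).IsDiag) (F : Finset (Sym2 V)) :
    edgeRank X + edgeRank (F.image (Sym2.map p)) ≤ edgeRank (X ∪ F) := by
  set φ := Finsupp.lmapDomain (ZMod 2) (ZMod 2) p
  have hspan : edgeSpan X ≤ edgeSpan (X ∪ F) := edgeSpan_mono subset_union_left
  have hrange : edgeRank (F.image (Sym2.map p)) ≤
      Module.finrank (ZMod 2) (LinearMap.range (φ.domRestrict (edgeSpan (X ∪ F)))) := by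
    rw [LinearMap.range_domRestrict, edgeRank, ← map_lmapDomain_edgeSpan]
    exact Submodule.finrank_mono (Submodule.map_mono (edgeSpan_mono subset_union_right))
  have hker : edgeRank X ≤
      Module.finrank (ZMod 2) (LinearMap.ker (φ.domRestrict (edgeSpan (X ∪ F)))) := by
    rw [LinearMap.ker_domRestrict, edgeRank, ← (Submodule.submoduleOfEquivOfLe hspan).finrank_eq]
    exact Submodule.finrank_mono (Submodule.comap_mono (edgeSpan_le_ker_lmapDomain hX))
  have hdim := LinearMap.finrank_range_add_finrank_ker (V := edgeSpan (X ∪ F))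
    (V₂ := κ →₀ ZMod 2) (φ.domRestrict (edgeSpan (X ∪ F)))
  unfold edgeRank at *
  lia

lemma edgeRank_add_card_le [Fintype V] [Fintype κ] (hp : Function.Surjective p)
    (hX : ∀ e ∈ X, (Sym2.map p e).IsDiag) :
    edgeRank X + Fintype.card κ ≤ Fintype.card V := by
  have hdim := LinearMap.finrank_range_add_finrank_ker (Finsupp.lmapDomain (ZMod 2) (ZMod 2) p)
  rw [LinearMap.range_eq_top.2 (Finsupp.mapDomain_surjective hp), finrank_top,
    Module.finrank_finsupp_self, Module.finrank_finsupp_self] at hdim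
  have hker : edgeRank X ≤ _ := Submodule.finrank_mono (edgeSpan_le_ker_lmapDomain hX)
  lia

lemma card_lt_two_pow_edgeRank (hF : ∀ e ∈ F, ¬e.IsDiag) : #F < 2 ^ edgeRank F := by
  have hcard : #(insert 0 (F.image edgeVec)) = #F + 1 := by
    rw [card_insert_of_notMem, card_image_of_injOn (edgeVec_injOn_not_isDiag.mono hF)]
    rw [mem_image]
    rintro ⟨e, he, h0⟩
    exact edgeVec_ne_zero (hF e he) h0
  have hspan : ((insert 0 (F.image edgeVec) : Finset (V →₀ ZMod 2)) : Set (V →₀ ZMod 2)) ⊆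
      edgeSpan F := by
    rw [coe_insert, coe_image]
    exact Set.insert_subset (edgeSpan F).zero_mem Submodule.subset_span
  calc #F < #(insert 0 (F.image edgeVec)) := hcard ▸ Nat.lt_succ_self _
    _ ≤ Nat.card (edgeSpan F) := by
      rw [← Set.ncard_coe_finset]
      exact Set.ncard_le_ncard hspan (inferInstanceAs (Finite (edgeSpan F)))
    _ = 2 ^ edgeRank F := by
      rw [Module.natCard_eq_pow_finrank (K := ZMod 2), Nat.card_zmod, edgeRank]

lemma card_le_edgeRank_of_card_le_two (hF : ∀ e ∈ F, ¬e.IsDiag) (hcard : #F ≤ 2) :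
    #F ≤ edgeRank F := by
  have hpow := card_lt_two_pow_edgeRank hF
  obtain h | h | h : edgeRank F = 0 ∨ edgeRank F = 1 ∨ 2 ≤ edgeRank F := by lia
  · rw [h] at hpow
    lia
  · rw [h] at hpow
    lia
  · exact hcard.trans h

end EdgeRank

section Components

variable {V : Type*} {X : Finset (Sym2 V)}

lemma edgeVec_mem_edgeSpan_of_reachable {u v : V}
    (h : (SimpleGraph.fromEdgeSet (X : Set (Sym2 V))).Reachable u v) :
    edgeVec s(u, v) ∈ edgeSpan X := by
  obtain ⟨w⟩ := h
  induction w with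
  | nil =>
    rw [edgeVec_eq_zero_of_isDiag (Sym2.mk_isDiag_iff.2 rfl)]
    exact Submodule.zero_mem _
  | @cons a b c hab _ ih =>
    have hstep : edgeVec s(a, b) ∈ edgeSpan X :=
      Submodule.subset_span ⟨s(a, b), (SimpleGraph.fromEdgeSet_adj _ |>.1 hab).1, rfl⟩
    have hsum : edgeVec s(a, b) + edgeVec s(b, c) = edgeVec s(a, c) := by
      simp only [edgeVec_mk, ZModModule.add_add_add_cancel]
    exact hsum ▸ Submodule.add_mem _ hstep ih

lemma card_le_edgeRank_add_card_connectedComponent [Fintype V] (X : Finset (Sym2 V)) :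
    Fintype.card V ≤ edgeRank X +
      Fintype.card (SimpleGraph.fromEdgeSet (X : Set (Sym2 V))).ConnectedComponent := by
  set G := SimpleGraph.fromEdgeSet (X : Set (Sym2 V))
  let rep : G.ConnectedComponent → (V →₀ ZMod 2) := fun k => Finsupp.single (Quot.out k) 1
  have htop : edgeSpan X ⊔ Submodule.span (ZMod 2) (Set.range rep) = ⊤ := by
    rw [eq_top_iff, ← Finsupp.basisSingleOne.span_eq, Submodule.span_le]
    rintro _ ⟨v, rfl⟩
    set u := Quot.out (G.connectedComponentMk v)
    have huv : G.Reachable v u := (SimpleGraph.ConnectedComponent.eq.1 (Quot.out_eq _)).symm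
    refine Submodule.mem_sup.2 ⟨_, edgeVec_mem_edgeSpan_of_reachable huv, Finsupp.single u 1,
      Submodule.subset_span ⟨G.connectedComponentMk v, rfl⟩, ?_⟩
    rw [edgeVec_mk, add_assoc, ZModModule.add_self, add_zero, Finsupp.coe_basisSingleOne]
  have hdim := Submodule.finrank_add_le_finrank_add_finrank (edgeSpan X)
    (Submodule.span (ZMod 2) (Set.range rep))
  rw [htop, finrank_top, Module.finrank_finsupp_self] at hdim
  exact hdim.trans (Nat.add_le_add_left (finrank_range_le_card rep) _)

lemma isDiag_map_connectedComponentMk {e : Sym2 V} (he : e ∈ X) :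
    (Sym2.map (SimpleGraph.fromEdgeSet (X : Set (Sym2 V))).connectedComponentMk e).IsDiag := by
  induction e with
  | _ u v =>
    rw [Sym2.map_mk, Sym2.mk_isDiag_iff]
    by_cases huv : u = v
    · rw [huv]
    · exact SimpleGraph.ConnectedComponent.sound
        ((SimpleGraph.fromEdgeSet_adj _).2 ⟨he, huv⟩).reachable

-- The witness is the partition into connected components.
lemma exists_surjective_isDiag_map {V : Type} [Fintype V] (X : Finset (Sym2 V)) :
    ∃ (κ : Type) (_ : Fintype κ) (p : V → κ), Function.Surjective p ∧
      (∀ e ∈ X, (Sym2.map p e).IsDiag) ∧ Fintype.card V ≤ edgeRank X + Fintype.card κ :=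
  ⟨_, _, _, Quot.mk_surjective, fun _ => isDiag_map_connectedComponentMk,
    card_le_edgeRank_add_card_connectedComponent X⟩

lemma connected_fromEdgeSet_of_card_le [Fintype V] [Nonempty V]
    (h : Fintype.card V ≤ edgeRank X + 1) :
    (SimpleGraph.fromEdgeSet (X : Set (Sym2 V))).Connected := by
  have hrank := edgeRank_add_card_le
    (p := (SimpleGraph.fromEdgeSet (X : Set (Sym2 V))).connectedComponentMk) Quot.mk_surjective
    fun _ => isDiag_map_connectedComponentMk
  have hone : Fintype.card (SimpleGraph.fromEdgeSet (X : Set (Sym2 V))).ConnectedComponent ≤ 1 := by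
    lia
  rw [Fintype.card_le_one_iff] at hone
  exact (SimpleGraph.connected_iff _).2
    ⟨fun u v => SimpleGraph.ConnectedComponent.eq.1 (hone _ _), inferInstance⟩

lemma card_le_edgeRank_of_connected [Fintype V]
    (h : (SimpleGraph.fromEdgeSet (X : Set (Sym2 V))).Connected) :
    Fintype.card V ≤ edgeRank X + 1 := by
  have := h.preconnected.subsingleton_connectedComponent
  exact (card_le_edgeRank_add_card_connectedComponent X).trans
    (Nat.add_le_add_left (Fintype.card_le_one_iff_subsingleton.2 this) _)

end Components

section Criterion

variable {V : Type} [Fintype V]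

lemma edgeRank_add_one_le [Nonempty V] (X : Finset (Sym2 V)) : edgeRank X + 1 ≤ Fintype.card V := by
  refine edgeRank_add_card_le (p := fun _ : V => ()) (fun _ => ⟨Classical.arbitrary V, rfl⟩) ?_
  rintro ⟨u, v⟩ -
  rfl

lemma card_add_edgeRank_image_le {κ : Type*} [Fintype κ] [DecidableEq κ] {p : V → κ}
    {S X : Finset (Sym2 V)} (hp : ∀ e ∈ S ∩ X, (Sym2.map p e).IsDiag)
    (hκ : Fintype.card V ≤ edgeRank (S ∩ X) + Fintype.card κ) (F : Finset (Sym2 V)) :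
    Fintype.card V + edgeRank (F.image (Sym2.map p)) ≤
      Fintype.card κ + edgeRank ((S ∪ F) ∩ X) + #(F \ X) := by
  have hsplit : S ∩ X ∪ F ⊆ (S ∪ F) ∩ X ∪ F \ X := by
    intro e he
    simp only [mem_union, mem_inter, mem_sdiff] at he ⊢
    tauto
  have himage := edgeRank_add_edgeRank_image_le hp F
  have hunion := (edgeRank_mono hsplit).trans (edgeRank_union_le _ _)
  lia

lemma card_sdiff_add_sum_card_sdiff_le {α ι : Type*} [Fintype α] [DecidableEq α] [Fintype ι]
    {S : Finset α} {F : ι → Finset α} (hSF : ∀ i, Disjoint S (F i))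
    (hFF : Pairwise (Function.onFun Disjoint F)) (X : Finset α) :
    #(S \ X) + ∑ i, #(F i \ X) ≤ #Xᶜ := by
  have hpair : ((univ : Finset ι) : Set ι).PairwiseDisjoint fun i => F i \ X := fun i _ j _ hij =>
    (hFF hij).mono sdiff_subset sdiff_subset
  rw [← card_biUnion hpair, ← card_union_of_disjoint]
  · refine card_le_card (union_subset ?_ (biUnion_subset.2 fun i _ => ?_)) <;>
      exact fun e he => mem_compl.2 (mem_sdiff.1 he).2
  · exact (disjoint_biUnion_right _ _ _).2 fun i _ => (hSF i).mono sdiff_subset sdiff_subset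

variable {G : SimpleGraph V} {c : Sym2 V → ℕ} {t : ℕ} {S : Finset (Sym2 V)}
  {F : Fin t → Finset (Sym2 V)}

lemma unionRankCondition_edgeRank [Nonempty V] (hSF : ∀ i, Disjoint S (F i))
    (hFF : Pairwise (Function.onFun Disjoint F))
    (hcut : ∀ (κ : Type) [Fintype κ] (p : V → κ), Function.Surjective p →
      t * (Fintype.card κ - 1) ≤ #(crossing S p) + ∑ i, edgeRank ((F i).image (Sym2.map p))) :
    UnionRankCondition (fun _ => edgeRank) (fun i => S ∪ F i) (t * (Fintype.card V - 1)) := by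
  intro X
  obtain ⟨κ, _, p, hp, hdiag, hκ⟩ := exists_surjective_isDiag_map (S ∩ X)
  have hcross : #(crossing S p) ≤ #(S \ X) := by
    refine card_le_card fun e he => ?_
    obtain ⟨heS, he⟩ := mem_crossing.1 he
    exact mem_sdiff.2 ⟨heS, fun heX => he (hdiag e (mem_inter.2 ⟨heS, heX⟩))⟩
  have hsum := sum_le_sum fun i (_ : i ∈ (univ : Finset (Fin t))) =>
    card_add_edgeRank_image_le hdiag hκ (F i)
  simp only [sum_add_distrib, sum_const, card_univ, Fintype.card_fin, smul_eq_mul] at hsum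
  obtain ⟨n, hn⟩ := Nat.exists_eq_add_of_le' (Fintype.card_pos (α := V))
  obtain ⟨s, hs⟩ := Nat.exists_eq_add_of_le'
    (Fintype.card_pos_iff.2 ⟨p (Classical.arbitrary V)⟩)
  have hcut := hcut κ p hp
  have hout := card_sdiff_add_sum_card_sdiff_le hSF hFF X
  rw [hs, Nat.succ_eq_add_one, zero_add, Nat.add_sub_cancel] at hcut
  rw [hn, hs, mul_add, mul_add] at hsum
  rw [hn, Nat.succ_eq_add_one, zero_add, Nat.add_sub_cancel]
  lia

-- The matroid union theorem turns the cut condition into `t` disjoint spanning connected subgraphs.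
theorem hasRainbowSpanningTrees_of_forall_surjective [Nonempty V]
    (hS : (S : Set (Sym2 V)) ⊆ G.edgeSet) (hF : ∀ i, (F i : Set (Sym2 V)) ⊆ G.edgeSet)
    (hSF : ∀ i, Disjoint S (F i)) (hFF : Pairwise (Function.onFun Disjoint F))
    (hc : ∀ i, Set.InjOn c (S ∪ F i))
    (hcut : ∀ (κ : Type) [Fintype κ] (p : V → κ), Function.Surjective p →
      t * (Fintype.card κ - 1) ≤ #(crossing S p) + ∑ i, edgeRank ((F i).image (Sym2.map p))) :
    HasRainbowSpanningTrees G c t := by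
  obtain ⟨B, hBA, hB, hrank⟩ := (unionRankCondition_edgeRank hSF hFF hcut).exists_pairwise_disjoint
    (fun _ => edgeRank_mono) fun _ => isSubmodular_edgeRank
  have hfull : ∀ i, edgeRank (B i) = Fintype.card V - 1 := by
    have hle : ∀ i ∈ univ, edgeRank (B i) ≤ Fintype.card V - 1 := fun i _ =>
      Nat.le_sub_of_add_le (edgeRank_add_one_le (B i))
    refine fun i => (sum_eq_sum_iff_of_le hle).1 (le_antisymm (sum_le_sum hle) ?_) i (mem_univ i)
    simpa only [sum_const, card_univ, Fintype.card_fin, smul_eq_mul] using hrank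
  have htree : ∀ i, ∃ T ≤ SimpleGraph.fromEdgeSet (B i : Set (Sym2 V)), T.IsTree := fun i =>
    (connected_fromEdgeSet_of_card_le (by rw [hfull i]; lia)).exists_isTree_le
  choose T hTB hT using htree
  have hTB : ∀ i, (T i).edgeSet ⊆ B i := fun i e he =>
    (SimpleGraph.edgeSet_fromEdgeSet _ ▸ SimpleGraph.edgeSet_mono (hTB i) he).1
  have hTA : ∀ i, (T i).edgeSet ⊆ S ∪ F i := fun i e he => by
    exact_mod_cast hBA i (hTB i he)
  refine ⟨T, fun i => ?_, hT, fun i => (hc i).mono (hTA i), fun i j hij => ?_⟩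
  · exact SimpleGraph.edgeSet_subset_edgeSet.1 ((hTA i).trans (Set.union_subset hS (hF i)))
  · exact Set.disjoint_of_subset (hTB i) (hTB j) (disjoint_coe.2 (hB hij))

end Criterion

section AntiRamsey

lemma exists_coloring_const_outside {α : Type*} [Finite α] {Z E : Finset α}
    (hZE : Z ⊂ E) :
    ∃ c : α → ℕ, (∀ e ∉ Z, c e = 0) ∧ #Z < #(E.image c) := by
  obtain ⟨g, hg⟩ := exists_injective_nat α
  obtain ⟨f, hfE, hfZ⟩ := exists_of_ssubset hZE
  set c : α → ℕ := fun e => if e ∈ Z then g e + 1 else 0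
  refine ⟨c, fun e he => if_neg he, ?_⟩
  have hinj : Set.InjOn c (insert f Z : Finset α) := by
    intro a ha b hb hab
    simp only [coe_insert, Set.mem_insert_iff, mem_coe] at ha hb
    simp only [c] at hab
    have := @hg a b
    grind
  calc #Z < #(insert f Z) := by rw [card_insert_of_notMem hfZ]; exact Nat.lt_succ_self _
    _ = #((insert f Z).image c) := (card_image_of_injOn hinj).symm
    _ ≤ #(E.image c) := card_le_card (image_subset_image (insert_subset hfE hZE.subset))

variable {V κ : Type} [Fintype V] {G : SimpleGraph V} {c : Sym2 V → ℕ} {t : ℕ}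

lemma le_antiRamsey (hc : ¬HasRainbowSpanningTrees G c t) :
    #(G.edgeFinset.image c) ≤ antiRamsey G t := by
  refine le_csSup ⟨#G.edgeFinset, ?_⟩ ⟨c, rfl, hc⟩
  rintro m ⟨c, rfl, -⟩
  exact card_image_le

lemma antiRamsey_le {m : ℕ}
    (h : ∀ c : Sym2 V → ℕ, m < #(G.edgeFinset.image c) → HasRainbowSpanningTrees G c t) :
    antiRamsey G t ≤ m := by
  refine csSup_le' ?_
  rintro _ ⟨c, rfl, hc⟩
  exact not_lt.1 fun hm => hc (h c hm)

lemma antiRamsey_le_card_edgeFinset (G : SimpleGraph V) (t : ℕ) :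
    antiRamsey G t ≤ #G.edgeFinset :=
  antiRamsey_le fun _ hc => absurd card_image_le hc.not_ge

lemma antiRamsey_eq_card_edgeFinset (h : #G.edgeFinset < t * (Fintype.card V - 1)) :
    antiRamsey G t = #G.edgeFinset := by
  refine le_antisymm (antiRamsey_le_card_edgeFinset G t) ?_
  obtain ⟨g, hg⟩ := exists_injective_nat (Sym2 V)
  rw [← card_image_of_injective G.edgeFinset hg]
  refine le_antiRamsey ?_
  rintro ⟨T, hTG, hT, -, hdisj⟩
  have hpair : ((univ : Finset (Fin t)) : Set (Fin t)).PairwiseDisjoint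
      fun i => (T i).edgeFinset := fun i _ j _ hij =>
    SimpleGraph.disjoint_edgeFinset.2 (SimpleGraph.disjoint_edgeSet.1 (hdisj i j hij))
  have hcard : ∀ i, #(T i).edgeFinset = Fintype.card V - 1 := fun i =>
    Nat.eq_sub_of_add_eq (hT i).card_edgeFinset
  refine h.not_ge ?_
  calc t * (Fintype.card V - 1) = ∑ i, #(T i).edgeFinset := by
        simp only [hcard, sum_const, card_univ, Fintype.card_fin, smul_eq_mul]
    _ = #(univ.biUnion fun i => (T i).edgeFinset) := (card_biUnion hpair).symm
    _ ≤ #G.edgeFinset := card_le_card (biUnion_subset.2 fun i _ =>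
        SimpleGraph.edgeFinset_mono (hTG i))

variable [Fintype κ] {p : V → κ}

lemma card_le_card_crossing_edgeFinset_add_one {T : SimpleGraph V} (hT : T.Connected)
    (hp : Function.Surjective p) : Fintype.card κ ≤ #(crossing T.edgeFinset p) + 1 := by
  have hunion : noncrossing T.edgeFinset p ∪ crossing T.edgeFinset p = T.edgeFinset :=
    filter_union_filter_not_eq _ _
  have hrank : Fintype.card V ≤ edgeRank T.edgeFinset + 1 := by
    refine card_le_edgeRank_of_connected ?_
    rwa [SimpleGraph.coe_edgeFinset, SimpleGraph.fromEdgeSet_edgeSet]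
  have hnon := edgeRank_add_card_le (X := noncrossing T.edgeFinset p) hp
    fun e he => (mem_noncrossing.1 he).2
  have hle := hunion ▸ edgeRank_union_le (noncrossing T.edgeFinset p) (crossing T.edgeFinset p)
  lia

-- A rainbow tree has at most one edge outside `Z`, so at least `|κ| - 2` crossing edges in `Z`.
lemma not_hasRainbowSpanningTrees_of_card_crossing_lt {Z : Finset (Sym2 V)} {k : ℕ}
    (hc : ∀ e ∉ Z, c e = k) (hp : Function.Surjective p)
    (hZ : #(crossing Z p) < t * (Fintype.card κ - 2)) :
    ¬HasRainbowSpanningTrees G c t := by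
  rintro ⟨T, -, hT, hrainbow, hdisj⟩
  have htree : ∀ i, Fintype.card κ - 2 ≤ #(crossing ((T i).edgeFinset ∩ Z) p) := by
    intro i
    have hcross := card_le_card_crossing_edgeFinset_add_one (hT i).connected hp
    have hout : #((T i).edgeFinset \ Z) ≤ 1 := by
      refine card_le_one.2 fun a ha b hb => ?_
      rw [mem_sdiff, SimpleGraph.mem_edgeFinset] at ha hb
      exact hrainbow i ha.1 hb.1 ((hc a ha.2).trans (hc b hb.2).symm)
    have hsub : crossing (T i).edgeFinset p ⊆
        crossing ((T i).edgeFinset ∩ Z) p ∪ (T i).edgeFinset \ Z := by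
      intro e he
      simp only [mem_crossing, mem_union, mem_inter, mem_sdiff] at he ⊢
      tauto
    have hle := (card_le_card hsub).trans (card_union_le _ _)
    lia
  have hpair : ((univ : Finset (Fin t)) : Set (Fin t)).PairwiseDisjoint
      fun i => crossing ((T i).edgeFinset ∩ Z) p := fun i _ j _ hij =>
    (SimpleGraph.disjoint_edgeFinset.2 (SimpleGraph.disjoint_edgeSet.1 (hdisj i j hij))).mono
      ((crossing_subset _ p).trans inter_subset_left)
      ((crossing_subset _ p).trans inter_subset_left)
  refine hZ.not_ge ?_
  calc t * (Fintype.card κ - 2) = ∑ _ : Fin t, (Fintype.card κ - 2) := by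
        simp only [sum_const, card_univ, Fintype.card_fin, smul_eq_mul]
    _ ≤ ∑ i, #(crossing ((T i).edgeFinset ∩ Z) p) := sum_le_sum fun i _ => htree i
    _ = #(univ.biUnion fun i => crossing ((T i).edgeFinset ∩ Z) p) := (card_biUnion hpair).symm
    _ ≤ #(crossing Z p) := card_le_card (biUnion_subset.2 fun i _ =>
        filter_subset_filter _ inter_subset_right)

-- The noncrossing edges and `t (|κ| - 2) - 1` crossing ones receive distinct colors, all remaining
-- edges one more color.
theorem card_noncrossing_add_le_antiRamsey (hp : Function.Surjective p)
    (hpos : 0 < t * (Fintype.card κ - 2))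
    (hle : t * (Fintype.card κ - 2) ≤ #(crossing G.edgeFinset p)) :
    #(noncrossing G.edgeFinset p) + t * (Fintype.card κ - 2) ≤ antiRamsey G t := by
  obtain ⟨Y, hY, hYcard⟩ := exists_subset_card_eq ((Nat.sub_le _ 1).trans hle)
  have hdisj : Disjoint (noncrossing G.edgeFinset p) Y :=
    disjoint_left.2 fun e he heY => (mem_crossing.1 (hY heY)).2 (mem_noncrossing.1 he).2
  have hcard : #(noncrossing G.edgeFinset p ∪ Y) =
      #(noncrossing G.edgeFinset p) + (t * (Fintype.card κ - 2) - 1) := by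
    rw [card_union_of_disjoint hdisj, hYcard]
  have hssub : noncrossing G.edgeFinset p ∪ Y ⊂ G.edgeFinset := by
    have hsub : noncrossing G.edgeFinset p ∪ Y ⊆ G.edgeFinset :=
      union_subset (filter_subset _ _) (hY.trans (crossing_subset _ p))
    refine hsub.ssubset_of_ne fun heq => ?_
    have htotal := card_noncrossing_add_card_crossing G.edgeFinset p
    rw [heq] at hcard
    lia
  obtain ⟨c, hc, himage⟩ := exists_coloring_const_outside hssub
  have hcross : #(crossing (noncrossing G.edgeFinset p ∪ Y) p) < t * (Fintype.card κ - 2) := by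
    have hsub : crossing (noncrossing G.edgeFinset p ∪ Y) p ⊆ Y := by
      intro e he
      simp only [crossing, noncrossing, mem_filter, mem_union] at he
      tauto
    have hYle := card_le_card hsub
    lia
  have hmax := le_antiRamsey (G := G)
    (not_hasRainbowSpanningTrees_of_card_crossing_lt hc hp hcross)
  lia

end AntiRamsey

section Binning

variable {α ι γ δ : Type*}

/-- The number of bins that contain at least two elements of `S`, where `β` places `e` into the bin
`β e`. -/
noncomputable def collisions [Fintype ι] (β : α → ι) (S : Finset α) : ℕ :=
  #{i | 1 < #{e ∈ S | β e = i}}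

/-- The elements of `H` that share their value under `c` with another element of `H`. -/
noncomputable def repeated (c : α → γ) (H : Finset α) : Finset α :=
  {e ∈ H | ∃ f ∈ H, f ≠ e ∧ c f = c e}

/-- Every bin of `β` contains at most two elements of `R`, and no two elements of the same color
under `c`. -/
def IsRainbowBinning [DecidableEq ι] (c : α → γ) (R : Finset α) (β : α → ι) : Prop :=
  (∀ i, #{e ∈ R | β e = i} ≤ 2) ∧ Set.InjOn (fun e => (β e, c e)) R

section Collisions

variable [Fintype ι] {β : α → ι} {S T : Finset α}

lemma collisions_mono (h : S ⊆ T) : collisions β S ≤ collisions β T :=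
  card_le_card <| monotone_filter_right _ fun _ _ hi =>
    hi.trans_le (card_le_card (filter_subset_filter _ h))

lemma exists_ne_of_collisions_ne_zero (h : collisions β S ≠ 0) :
    ∃ e ∈ S, ∃ f ∈ S, e ≠ f ∧ β e = β f := by
  obtain ⟨i, hi⟩ := card_pos.1 (Nat.pos_of_ne_zero h)
  obtain ⟨e, he, f, hf, hef⟩ := one_lt_card.1 (mem_filter.1 hi).2
  obtain ⟨⟨he, hei⟩, ⟨hf, hfi⟩⟩ := mem_filter.1 he, mem_filter.1 hf
  exact ⟨e, he, f, hf, hef, hei.trans hfi.symm⟩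

lemma collisions_insert_le [DecidableEq α] (e : α) (S : Finset α) :
    collisions β (insert e S) ≤ collisions β S + 1 := by
  refine (card_le_card fun i hi => ?_).trans (card_insert_le (β e) _)
  simp only [mem_filter, mem_univ, true_and, mem_insert, filter_insert] at hi ⊢
  split_ifs at hi with he
  · exact .inl he.symm
  · exact .inr hi

lemma two_mul_collisions_le (β : α → ι) (S : Finset α) : 2 * collisions β S ≤ #S := by
  rw [card_eq_sum_card_fiberwise (f := β) (t := univ) fun _ _ => mem_coe.2 (mem_univ _),
    collisions, card_filter, mul_sum]
  refine sum_le_sum fun i _ => ?_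
  split_ifs <;> lia

lemma card_add_collisions_le (h : ∀ i, ∃ e ∈ S, β e = i) :
    Fintype.card ι + collisions β S ≤ #S := by
  rw [card_eq_sum_card_fiberwise (f := β) (t := univ) fun _ _ => mem_coe.2 (mem_univ _),
    collisions, card_filter, Fintype.card_eq_sum_ones, ← sum_add_distrib]
  refine sum_le_sum fun i _ => ?_
  obtain ⟨e, he, hei⟩ := h i
  have hpos : 0 < #{e ∈ S | β e = i} := card_pos.2 ⟨e, mem_filter.2 ⟨he, hei⟩⟩
  split_ifs <;> lia

end Collisions

variable {R : Finset α} {c : α → γ} {l : α → δ} {π : α → ι × Bool}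

lemma mem_repeated {e : α} : e ∈ repeated c R ↔ e ∈ R ∧ ∃ f ∈ R, f ≠ e ∧ c f = c e :=
  mem_filter

lemma eq_or_eq_of_bin_eq (hπ : Set.InjOn π R) {e f x : α} (he : e ∈ R) (hf : f ∈ R) (hx : x ∈ R)
    (hef : e ≠ f) (hbin : (π e).1 = (π f).1) (hxe : (π x).1 = (π e).1) : x = e ∨ x = f := by
  by_contra! hne
  have hxe' : (π x).2 ≠ (π e).2 := fun h => hne.1 (hπ hx he (Prod.ext hxe h))
  have hfe' : (π f).2 ≠ (π e).2 := fun h => hef (hπ he hf (Prod.ext hbin h.symm))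
  exact hne.2 (hπ hx hf (Prod.ext (hxe.trans hbin)
    ((Bool.eq_not.2 hxe').trans (Bool.eq_not.2 hfe').symm)))

lemma bin_eq_or_of_bin_swap_eq [DecidableEq ι] (hπ : Set.InjOn π R) {e f : α} (he : e ∈ R)
    (hf : f ∈ R) (hef : e ≠ f) (hbin : (π e).1 = (π f).1) {j : ι} (hj : (π e).1 ≠ j) (b : Bool)
    {x y : α} (hx : x ∈ R) (hy : y ∈ R) (hxy : x ≠ y)
    (h : (Equiv.swap (π f) (j, b) (π x)).1 = (Equiv.swap (π f) (j, b) (π y)).1) :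
    (π x).1 = (π y).1 ∧ x ≠ e ∧ y ≠ e ∨ x = e ∧ π y = (j, b) ∨ y = e ∧ π x = (j, b) ∨
      x = f ∧ π y = (j, !b) ∨ y = f ∧ π x = (j, !b) := by
  have hfull : ∀ x ∈ R, (π x).1 = (π e).1 → x = e ∨ x = f := fun x hx =>
    eq_or_eq_of_bin_eq hπ he hf hx hef hbin
  have hslot : ∀ x, (π x).1 = j → π x = (j, b) ∨ π x = (j, !b) := fun x hx =>
    (Bool.eq_or_eq_not (π x).2 b).imp (Prod.ext hx) (Prod.ext hx)
  have hinj : ∀ x ∈ R, π x = π f → x = f := fun x hx h => hπ hx hf h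
  simp only [Equiv.swap_apply_def] at h
  have := hfull x hx
  have := hfull y hy
  have := hslot x
  have := hslot y
  have := @hπ x hx y hy
  have := hinj x hx
  have := hinj y hy
  grind

lemma repeated_subset (c : α → γ) (R : Finset α) : repeated c R ⊆ R :=
  fun _ he => (mem_repeated.1 he).1

lemma exists_slot_ne {e f : α} {j : ι} (hπ : Set.InjOn π R)
    (hc : Set.InjOn (fun e => ((π e).1, c e)) R) (hef : c e ≠ c f) :
    ∃ b, (∀ g ∈ R, π g = (j, b) → c g ≠ c e) ∧ ∀ g ∈ R, π g = (j, !b) → c g ≠ c f := by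
  have hdiff : ∀ g ∈ R, ∀ h ∈ R, ∀ b, π g = (j, b) → π h = (j, !b) → c g ≠ c h := by
    intro g hg h hh b hgb hhb hgh
    have hbin : (π g).1 = (π h).1 := by rw [hgb, hhb]
    have heq : g = h := hc hg hh (Prod.ext hbin hgh)
    rw [heq, hhb] at hgb
    exact Bool.not_ne_self b (Prod.ext_iff.1 hgb).2
  by_contra! h
  have hsame : ∀ g ∈ R, ∀ h ∈ R, π g = π h → c g = c h := fun g hg h hh hgh =>
    congrArg c (hπ hg hh hgh)
  have htrue := h true
  have hfalse := h false
  simp only [Bool.not_true, Bool.not_false] at htrue hfalse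
  grind

-- The bin of `e` and `f` and a bin `j` missing their label exchange `f` for one of the elements
-- of `j`; as `c e ≠ c f`, one of the two exchanges puts no equal colors into one bin.
lemma exists_repeated_ssubset (hπ : Set.InjOn π R)
    (hc : Set.InjOn (fun e => ((π e).1, c e)) R) {e f : α} (he : e ∈ R) (hf : f ∈ R) (hef : e ≠ f)
    (hbin : (π e).1 = (π f).1) (hl : l e = l f) {j : ι} (hj : ∀ g ∈ R, (π g).1 = j → l g ≠ l e) :
    ∃ π' : α → ι × Bool, Set.InjOn π' R ∧ Set.InjOn (fun e => ((π' e).1, c e)) R ∧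
      repeated (fun e => ((π' e).1, l e)) R ⊂ repeated (fun e => ((π e).1, l e)) R := by
  have hcef : c e ≠ c f := fun h => hef (hc he hf (Prod.ext hbin h))
  obtain ⟨b, hbe, hbf⟩ := exists_slot_ne (j := j) hπ hc hcef
  set π' := Equiv.swap (π f) (j, b) ∘ π
  have hshare : ∀ x ∈ R, ∀ y ∈ R, x ≠ y → (π' x).1 = (π' y).1 →
      (π x).1 = (π y).1 ∧ x ≠ e ∧ y ≠ e ∨ x = e ∧ π y = (j, b) ∨ y = e ∧ π x = (j, b) ∨
        x = f ∧ π y = (j, !b) ∨ y = f ∧ π x = (j, !b) :=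
    fun x hx y hy => bin_eq_or_of_bin_swap_eq hπ he hf hef hbin (hj e he · rfl) b hx hy
  refine ⟨π', (Equiv.injective _).comp_injOn hπ, fun x hx y hy hxy => ?_, ?_⟩
  · by_contra hne
    have := @hc x hx y hy
    have := hshare x hx y hy hne (Prod.ext_iff.1 hxy).1
    grind
  · refine (ssubset_iff_of_subset fun x hx => ?_).2 ⟨e, ?_, fun hx => ?_⟩
    · obtain ⟨hx, y, hy, hyx, hxy⟩ := mem_repeated.1 hx
      have := hshare y hy x hx hyx (Prod.ext_iff.1 hxy).1
      have := hj x hx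
      have := hj y hy
      exact mem_repeated.2 ⟨hx, y, hy, hyx, by grind⟩
    · exact mem_repeated.2 ⟨he, f, hf, hef.symm, Prod.ext hbin.symm hl.symm⟩
    · obtain ⟨-, y, hy, hye, hye'⟩ := mem_repeated.1 hx
      have := hshare y hy e he hye (Prod.ext_iff.1 hye').1
      have := hj y hy
      grind

lemma exists_forall_bin_of_repeated (hπ : Set.InjOn π R)
    (hc : Set.InjOn (fun e => ((π e).1, c e)) R) (l : α → δ) :
    ∃ π' : α → ι × Bool, Set.InjOn π' R ∧ Set.InjOn (fun e => ((π' e).1, c e)) R ∧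
      ∀ e ∈ R, ∀ f ∈ R, e ≠ f → (π' e).1 = (π' f).1 → l e = l f →
        ∀ j, ∃ g ∈ R, (π' g).1 = j ∧ l g = l e := by
  obtain ⟨π', ⟨hπ', hc'⟩, hmin⟩ := WellFounded.has_min
    (measure fun π : α → ι × Bool => #(repeated (fun e => ((π e).1, l e)) R)).wf
    {π | Set.InjOn π R ∧ Set.InjOn (fun e => ((π e).1, c e)) R} ⟨π, hπ, hc⟩
  refine ⟨π', hπ', hc', fun e he f hf hef hbin hl => ?_⟩
  by_contra! hj
  obtain ⟨j, hj⟩ := hj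
  obtain ⟨π₁, hπ₁, hc₁, hlt⟩ := exists_repeated_ssubset hπ' hc' he hf hef hbin hl hj
  exact hmin π₁ ⟨hπ₁, hc₁⟩ (card_lt_card hlt)

variable [Fintype ι]

lemma exists_injOn_bins [Nonempty ι] [DecidableEq γ] (hR : #R ≤ 2 * Fintype.card ι)
    (hc : ∀ k, #{e ∈ R | c e = k} ≤ Fintype.card ι) :
    ∃ π : α → ι × Bool, Set.InjOn π R ∧ Set.InjOn (fun e => ((π e).1, c e)) R := by
  obtain ⟨π₀, -, hπ₀⟩ := R.finite_toSet.exists_injOn_of_encard_le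
    (t := (Set.univ : Set (ι × Bool))) (by
      rw [Set.encard_coe_eq_coe_finsetCard, Set.encard_univ, ENat.card_eq_coe_fintype_card,
        Fintype.card_prod, Fintype.card_bool, mul_comm]
      exact_mod_cast hR)
  obtain ⟨π, hπ, -, hall⟩ := exists_forall_bin_of_repeated (c := id) hπ₀
    (fun _ _ _ _ h => (Prod.ext_iff.1 h).2) c
  refine ⟨π, hπ, fun e he f hf h => ?_⟩
  obtain ⟨hbin, hcol⟩ := Prod.ext_iff.1 h
  by_contra hef
  have hall := hall e he f hf hef hbin hcol
  refine (hc (c e)).not_gt (Nat.lt_of_lt_of_le (Nat.lt_add_of_pos_right ?_)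
    (card_add_collisions_le (β := fun g => (π g).1) fun j => ?_))
  · exact card_pos.2 ⟨(π e).1, mem_filter.2 ⟨mem_univ _, one_lt_card.2
      ⟨e, mem_filter.2 ⟨mem_filter.2 ⟨he, rfl⟩, rfl⟩,
        f, mem_filter.2 ⟨mem_filter.2 ⟨hf, hcol.symm⟩, hbin.symm⟩, hef⟩⟩⟩
  · obtain ⟨g, hg, hgj, hgc⟩ := hall j
    exact ⟨g, mem_filter.2 ⟨hg, hgc⟩, hgj⟩

theorem exists_binning [Nonempty ι] [DecidableEq ι] [DecidableEq γ] {A B : Finset α}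
    (hA : A ⊆ R) (hB : B ⊆ R) (hAB : Disjoint A B) (hR : #R ≤ 2 * Fintype.card ι)
    (hc : ∀ k, #{e ∈ R | c e = k} ≤ Fintype.card ι) :
    ∃ β : α → ι, IsRainbowBinning c R β ∧
      (collisions β A = 0 ∨ Fintype.card ι + collisions β A ≤ #A) ∧
      (collisions β B = 0 ∨ Fintype.card ι + collisions β B ≤ #B) := by
  obtain ⟨π₀, hπ₀, hc₀⟩ := exists_injOn_bins hR hc
  obtain ⟨π, hπ, hcπ, hall⟩ :=
    exists_forall_bin_of_repeated hπ₀ hc₀ fun e => (decide (e ∈ A), decide (e ∈ B))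
  have hspread : ∀ S ⊆ R, (∀ e ∈ S, ∀ f, f ∈ S ↔ (e ∈ A ↔ f ∈ A) ∧ (e ∈ B ↔ f ∈ B)) →
      collisions (fun e => (π e).1) S = 0 ∨
        Fintype.card ι + collisions (fun e => (π e).1) S ≤ #S := by
    intro S hS hlabel
    refine or_iff_not_imp_left.2 fun hne => card_add_collisions_le fun j => ?_
    obtain ⟨e, heS, f, hfS, hef, hbin⟩ := exists_ne_of_collisions_ne_zero hne
    obtain ⟨g, -, hgj, hge⟩ := hall e (hS heS) f (hS hfS) hef hbin (by grind) j
    exact ⟨g, (hlabel e heS g).2 (by grind), hgj⟩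
  refine ⟨fun e => (π e).1, ⟨fun i => ?_, hcπ⟩, hspread A hA ?_, hspread B hB ?_⟩
  · have hmaps : Set.MapsTo (fun e => (π e).2) ({e ∈ R | (π e).1 = i} : Finset α)
        (univ : Finset Bool) := fun _ _ => mem_coe.2 (mem_univ _)
    refine (card_le_card_of_injOn _ hmaps fun e he f hf hef => ?_).trans_eq Fintype.card_bool
    obtain ⟨⟨he, hei⟩, ⟨hf, hfi⟩⟩ := mem_filter.1 he, mem_filter.1 hf
    exact hπ he hf (Prod.ext (hei.trans hfi.symm) hef)
  · intro e he f
    have := disjoint_left.1 hAB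
    grind
  · intro e he f
    have := disjoint_left.1 hAB
    grind

end Binning

section Repeated

variable {α ι γ : Type*} {c : α → γ} {H : Finset α}

lemma card_repeated_add_two_mul_card_image_le [DecidableEq γ] (c : α → γ) (H : Finset α) :
    #(repeated c H) + 2 * #(H.image c) ≤ 2 * #H := by
  have hmaps : ∀ X ⊆ H, Set.MapsTo c X (H.image c) := fun X hX e he =>
    mem_coe.2 (mem_image_of_mem c (hX he))
  have hcard := fun X hX => card_eq_sum_card_fiberwise (hmaps X hX)
  rw [hcard _ (repeated_subset c H), card_eq_sum_ones, mul_sum, ← sum_add_distrib,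
    hcard H subset_rfl, mul_sum]
  refine sum_le_sum fun k hk => ?_
  have hpos : 0 < #{e ∈ H | c e = k} := by
    obtain ⟨e, he, hek⟩ := mem_image.1 hk
    exact card_pos.2 ⟨e, mem_filter.2 ⟨he, hek⟩⟩
  obtain hempty | ⟨e, he⟩ := ({e ∈ repeated c H | c e = k} : Finset α).eq_empty_or_nonempty
  · rw [hempty, card_empty]
    lia
  · obtain ⟨heR, hek⟩ := mem_filter.1 he
    obtain ⟨heH, f, hf, hfe, hfc⟩ := mem_repeated.1 heR
    have htwo : 1 < #{e ∈ H | c e = k} := one_lt_card.2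
      ⟨f, mem_filter.2 ⟨hf, hfc.trans hek⟩, e, mem_filter.2 ⟨heH, hek⟩, hfe⟩
    have hle : #{e ∈ repeated c H | c e = k} ≤ #{e ∈ H | c e = k} :=
      card_le_card (filter_subset_filter _ (repeated_subset c H))
    lia

lemma card_filter_eq_add_card_image_le [DecidableEq γ] (c : α → γ) (H : Finset α) (k : γ) :
    #{e ∈ H | c e = k} + #(H.image c) ≤ #H + 1 := by
  have himage : H.image c ⊆ insert k (({e ∈ H | ¬c e = k} : Finset α).image c) := by
    intro j hj
    simp only [mem_insert, mem_image, mem_filter] at hj ⊢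
    grind
  have hle := (card_le_card himage).trans (card_insert_le _ _)
  have hrest := card_image_le (s := {e ∈ H | ¬c e = k}) (f := c)
  have hsplit := card_filter_add_card_filter_not (s := H) (fun e => c e = k)
  lia

lemma injOn_sdiff_repeated_union_bin [DecidableEq α] [DecidableEq ι] {β : α → ι}
    (hβ : Set.InjOn (fun e => (β e, c e)) (repeated c H)) (i : ι) :
    Set.InjOn c ((H \ repeated c H : Finset α) ∪ ({e ∈ repeated c H | β e = i} : Finset α)) := by
  have hH : ∀ e ∈ H \ repeated c H ∪ ({e ∈ repeated c H | β e = i} : Finset α), e ∈ H := by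
    intro e he
    simp only [mem_union, mem_sdiff, mem_filter, mem_repeated] at he
    tauto
  rw [← coe_union]
  intro e he f hf hef
  have heH := hH e he
  have hfH := hH f hf
  by_contra hne
  have heR : e ∈ repeated c H := mem_repeated.2 ⟨heH, f, hfH, Ne.symm hne, hef.symm⟩
  have hfR : f ∈ repeated c H := mem_repeated.2 ⟨hfH, e, heH, hne, hef⟩
  simp only [mem_coe, mem_union, mem_sdiff, mem_filter, heR, hfR, not_true, and_false, true_and,
    false_or] at he hf
  exact hne (hβ heR hfR (Prod.ext (he.trans hf.symm) hef))

end Repeated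

section Counting

variable {V : Type*} {H R X : Finset (Sym2 V)} {S : Finset V}

/-- The edges of `X` with an endpoint in `S`; for `S = {v}` these are the edges of `X` at `v`. -/
noncomputable def touching (X : Finset (Sym2 V)) (S : Finset V) : Finset (Sym2 V) :=
  {e ∈ X | ∃ v ∈ S, v ∈ e}

/-- The edges of `X` with both endpoints in `S`. -/
noncomputable def inside (X : Finset (Sym2 V)) (S : Finset V) : Finset (Sym2 V) :=
  {e ∈ X | ∀ v ∈ e, v ∈ S}

/-- The edges of `X` at the vertex `v` whose other endpoint lies outside `S`, for `v ∈ S`. -/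
noncomputable def outStar (X : Finset (Sym2 V)) (v : V) (S : Finset V) : Finset (Sym2 V) :=
  {e ∈ X | v ∈ e ∧ ∀ w ∈ S, w ∈ e → w = v}

lemma mem_touching {e : Sym2 V} : e ∈ touching X S ↔ e ∈ X ∧ ∃ v ∈ S, v ∈ e :=
  mem_filter

lemma mem_inside {e : Sym2 V} : e ∈ inside X S ↔ e ∈ X ∧ ∀ v ∈ e, v ∈ S :=
  mem_filter

lemma mem_outStar {e : Sym2 V} {v : V} :
    e ∈ outStar X v S ↔ e ∈ X ∧ v ∈ e ∧ ∀ w ∈ S, w ∈ e → w = v :=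
  mem_filter

lemma mem_touching_singleton {e : Sym2 V} {v : V} : e ∈ touching X {v} ↔ e ∈ X ∧ v ∈ e := by
  simp only [mem_touching, mem_singleton, exists_eq_left]

lemma touching_mono {Y : Finset (Sym2 V)} (h : X ⊆ Y) (S : Finset V) :
    touching X S ⊆ touching Y S :=
  filter_subset_filter _ h

lemma card_filter_mem_eq {e : Sym2 V} (he : ¬e.IsDiag) (S : Finset V) :
    #{v ∈ S | v ∈ e} = (if ∃ v ∈ S, v ∈ e then 1 else 0) + if ∀ v ∈ e, v ∈ S then 1 else 0 := by
  induction e with | h u w =>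
  have hfilter : ({v ∈ S | v ∈ s(u, w)} : Finset V) = {v ∈ ({u, w} : Finset V) | v ∈ S} := by
    ext v
    simp only [mem_filter, Sym2.mem_iff, mem_insert, mem_singleton, and_comm]
  have hne : u ≠ w := he
  rw [hfilter, filter_insert, filter_singleton]
  simp only [Sym2.mem_iff]
  split_ifs <;> grind

lemma sum_card_touching_singleton (hX : ∀ e ∈ X, ¬e.IsDiag) (S : Finset V) :
    ∑ v ∈ S, #(touching X {v}) = #(touching X S) + #(inside X S) := by
  have hstar : ∀ v, touching X {v} = bipartiteAbove (fun v e => v ∈ e) X v := fun v => by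
    ext e
    rw [mem_touching_singleton, mem_bipartiteAbove]
  rw [sum_congr rfl fun v _ => congrArg card (hstar v),
    sum_card_bipartiteAbove_eq_sum_card_bipartiteBelow, touching, inside, card_filter, card_filter,
    ← sum_add_distrib]
  exact sum_congr rfl fun e he => card_filter_mem_eq (hX e he) S

lemma card_touching_add_card_inside_compl [Fintype V] (X : Finset (Sym2 V)) (S : Finset V) :
    #(touching X S) + #(inside X Sᶜ) = #X := by
  have hinside : inside X Sᶜ = {e ∈ X | ¬∃ v ∈ S, v ∈ e} := by
    ext e
    simp only [mem_inside, mem_filter, mem_compl]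
    grind
  rw [hinside]
  exact card_filter_add_card_filter_not _

lemma card_inside_le (hX : ∀ e ∈ X, ¬e.IsDiag) (S : Finset V) : #(inside X S) ≤ (#S).choose 2 := by
  rw [← Sym2.card_image_offDiag]
  refine card_le_card fun e he => ?_
  obtain ⟨heX, heS⟩ := mem_inside.1 he
  induction e with | h u w =>
  exact mem_image.2 ⟨(u, w), mem_offDiag.2
    ⟨heS u (Sym2.mem_mk_left u w), heS w (Sym2.mem_mk_right u w), hX _ heX⟩, rfl⟩

lemma card_le_card_touching_add_choose [Fintype V] (hX : ∀ e ∈ X, ¬e.IsDiag) (S : Finset V) :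
    #X ≤ #(touching X S) + (Fintype.card V - #S).choose 2 := by
  rw [← card_touching_add_card_inside_compl X S, ← card_compl]
  exact Nat.add_le_add_left (card_inside_le hX _) _

lemma sum_card_touching_add_le (hH : ∀ e ∈ H, ¬e.IsDiag) (hRH : R ⊆ H) (S : Finset V) :
    ∑ v ∈ S, #(touching R {v}) + #(inside H S) + 2 * #(touching H S) ≤
      #R + 2 * ∑ v ∈ S, #(touching H {v}) := by
  rw [sum_card_touching_singleton hH, sum_card_touching_singleton fun e he => hH e (hRH he)]
  have htouch : #(touching R S) ≤ #R := card_filter_le _ _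
  have hinside : #(inside R S) ≤ #(inside H S) := card_le_card (filter_subset_filter _ hRH)
  lia

end Counting

section Parallel

variable {V κ ι : Type*} {R : Finset (Sym2 V)} {p : V → κ} {β : Sym2 V → ι}

/-- The bins with two crossing edges that become parallel when every fiber of `p` is contracted. -/
noncomputable def parallelBins (p : V → κ) (β : Sym2 V → ι) (R : Finset (Sym2 V)) : Finset ι :=
  (repeated (fun e => (β e, Sym2.map p e)) (crossing R p)).image β

lemma mem_parallelBins {i : ι} : i ∈ parallelBins p β R ↔ ∃ e ∈ crossing R p, ∃ f ∈ crossing R p,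
    f ≠ e ∧ β f = β e ∧ Sym2.map p f = Sym2.map p e ∧ β e = i := by
  simp only [parallelBins, mem_image, mem_repeated, Prod.mk.injEq]
  grind

lemma card_parallelBins_le_collisions [Fintype ι] (p : V → κ) (β : Sym2 V → ι)
    (R : Finset (Sym2 V)) : #(parallelBins p β R) ≤ collisions β R := by
  refine card_le_card fun i hi => ?_
  obtain ⟨e, he, f, hf, hfe, hβ, -, rfl⟩ := mem_parallelBins.1 hi
  exact mem_filter.2 ⟨mem_univ _, one_lt_card.2 ⟨f, mem_filter.2 ⟨crossing_subset R p hf, hβ⟩,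
    e, mem_filter.2 ⟨crossing_subset R p he, rfl⟩, hfe⟩⟩

lemma parallelBins_eq_empty (hp : Function.Injective p) : parallelBins p β R = ∅ := by
  refine eq_empty_of_forall_notMem fun i hi => ?_
  obtain ⟨e, -, f, -, hfe, -, hmap, -⟩ := mem_parallelBins.1 hi
  exact hfe (Sym2.map.injective hp hmap)

lemma card_crossing_bin_le [DecidableEq ι] [DecidableEq κ] {i : ι}
    (hcard : #{e ∈ R | β e = i} ≤ 2) :
    #(crossing {e ∈ R | β e = i} p) ≤
      edgeRank (({e ∈ R | β e = i} : Finset (Sym2 V)).image (Sym2.map p)) +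
        if i ∈ parallelBins p β R then 1 else 0 := by
  set F : Finset (Sym2 V) := {e ∈ R | β e = i}
  have hle : #(crossing F p) ≤ 2 := (card_le_card (crossing_subset F p)).trans hcard
  have hrank : #((crossing F p).image (Sym2.map p)) ≤ edgeRank (F.image (Sym2.map p)) := by
    refine (card_le_edgeRank_of_card_le_two ?_ (card_image_le.trans hle)).trans
      (edgeRank_mono (image_subset_image (crossing_subset F p)))
    simp only [mem_image, mem_crossing]
    rintro _ ⟨e, ⟨-, he⟩, rfl⟩
    exact he
  split_ifs with hi
  · obtain hempty | hne := (crossing F p).eq_empty_or_nonempty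
    · simp only [hempty, card_empty, Nat.zero_le]
    · have hpos := card_pos.2 (hne.image (Sym2.map p))
      lia
  · rwa [card_image_of_injOn] at hrank
    intro e he f hf hef
    obtain ⟨heF, he⟩ := mem_crossing.1 he
    obtain ⟨hfF, hf⟩ := mem_crossing.1 hf
    obtain ⟨heR, hei⟩ := mem_filter.1 heF
    obtain ⟨hfR, hfi⟩ := mem_filter.1 hfF
    by_contra hne
    exact hi (mem_parallelBins.2 ⟨f, mem_crossing.2 ⟨hfR, hf⟩, e, mem_crossing.2 ⟨heR, he⟩, hne,
      hei.trans hfi.symm, hef, hfi⟩)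

lemma card_crossing_le_add_card_parallelBins [Fintype ι] [DecidableEq ι] [DecidableEq κ]
    [DecidableEq V] (hcard : ∀ i, #{e ∈ R | β e = i} ≤ 2) (H : Finset (Sym2 V)) (p : V → κ) :
    #(crossing H p) ≤ #(crossing (H \ R) p) +
      ∑ i, edgeRank (({e ∈ R | β e = i} : Finset (Sym2 V)).image (Sym2.map p)) +
        #(parallelBins p β R) := by
  have hsum : #(crossing R p) = ∑ i, #(crossing {e ∈ R | β e = i} p) := by
    rw [card_eq_sum_card_fiberwise (f := β) (t := univ) fun _ _ => mem_coe.2 (mem_univ _)]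
    refine sum_congr rfl fun i _ => congrArg card ?_
    ext e
    simp only [mem_crossing, mem_filter]
    tauto
  have hbins : ∑ i, (if i ∈ parallelBins p β R then 1 else 0) = #(parallelBins p β R) := by
    rw [← card_filter, filter_univ_mem]
  have hle := sum_le_sum fun i (_ : i ∈ (univ : Finset ι)) =>
    card_crossing_bin_le (p := p) (hcard i)
  rw [← hsum, sum_add_distrib, hbins] at hle
  have hsplit : crossing H p ⊆ crossing (H \ R) p ∪ crossing R p := by
    intro e he
    simp only [mem_crossing, mem_union, mem_sdiff] at he ⊢
    tauto
  have hsplit_le := (card_le_card hsplit).trans (card_union_le _ _)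
  lia

end Parallel

section Cuts

lemma choose_two_succ (n : ℕ) : (n + 1).choose 2 = n.choose 2 + n := by
  rw [Nat.choose_succ_succ', Nat.choose_one_right, add_comm]

lemma choose_two_add (a b : ℕ) : (a + b).choose 2 = a.choose 2 + b.choose 2 + a * b := by
  induction b with
  | zero => rfl
  | succ b ih =>
    rw [← add_assoc, choose_two_succ, choose_two_succ, ih]
    ring

lemma sum_choose_two_le {κ : Type*} (s : Finset κ) (b : κ → ℕ) :
    ∑ k ∈ s, (b k + 1).choose 2 ≤ (∑ k ∈ s, b k + 1).choose 2 := by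
  induction s using Finset.induction_on with
  | empty => exact Nat.zero_le _
  | insert k s hk ih =>
    rw [sum_insert hk, sum_insert hk, add_assoc, choose_two_succ (b k),
      choose_two_add (b k) (∑ j ∈ s, b j + 1)]
    linarith [Nat.le_mul_of_pos_right (b k) (Nat.succ_pos (∑ j ∈ s, b j))]

lemma sum_choose_two_le_of_ne {κ : Type*} {s : Finset κ} {b : κ → ℕ} {j k : κ} (hj : j ∈ s)
    (hk : k ∈ s) (hjk : j ≠ k) (hbj : b j ≠ 0) (hbk : b k ≠ 0) :
    ∑ i ∈ s, (b i + 1).choose 2 ≤ (∑ i ∈ s, b i).choose 2 + 1 := by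
  have hle := sum_choose_two_le (s.erase j) b
  have hrest : b k ≤ ∑ i ∈ s.erase j, b i :=
    single_le_sum (f := b) (fun _ _ => Nat.zero_le _) (mem_erase.2 ⟨hjk.symm, hk⟩)
  rw [← add_sum_erase s _ hj, ← add_sum_erase s b hj, choose_two_succ (b j),
    choose_two_add (b j) (∑ i ∈ s.erase j, b i)]
  rw [choose_two_succ] at hle
  have hmul : b j + ∑ i ∈ s.erase j, b i ≤ b j * ∑ i ∈ s.erase j, b i + 1 := by
    obtain ⟨m, hm⟩ := Nat.exists_eq_succ_of_ne_zero hbj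
    obtain ⟨l, hl⟩ := Nat.exists_eq_succ_of_ne_zero
      (Nat.ne_of_gt ((Nat.pos_of_ne_zero hbk).trans_le hrest))
    rw [hm, hl]
    lia
  lia

lemma two_mul_choose_two_succ (n : ℕ) : 2 * (n + 1).choose 2 = (n + 1) * n := by
  have h := Nat.add_one_mul_choose_eq n 1
  rw [Nat.choose_one_right] at h
  rw [h, mul_comm]

lemma mul_add_choose_two_le {n s t N h : ℕ} (ht : 0 < t) (hN : 2 ≤ N) (hs : 0 < s)
    (hn : n = N + s + 1) (htn : 2 * t ≤ n) (hforest : t * (n - 1) ≤ h)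
    (hdense : 3 ≤ n → (n - 2).choose 2 + 2 * t ≤ h) : t * (s + 1) + N.choose 2 ≤ h := by
  subst hn
  obtain rfl | hN := hN.eq_or_lt
  · refine le_trans ?_ hforest
    rw [Nat.add_sub_cancel, add_comm 2 s, Nat.choose_self]
    linarith
  · refine le_trans ?_ (hdense (by lia))
    obtain ⟨q, rfl⟩ := Nat.exists_eq_add_of_lt hs
    rw [show N + (0 + q + 1) + 1 - 2 = N + q by lia, choose_two_add N q]
    have hq := two_mul_choose_two_succ q
    rw [choose_two_succ] at hq
    nlinarith [Nat.mul_le_mul_right q htn, Nat.mul_le_mul_right q hN]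

lemma mul_add_choose_two_succ_le {n s t N h : ℕ} (hN : 0 < N)
    (hn : n = N + s + 1) (hs : s ≤ 2 → n < 2 * t + s) (hforest : t * (n - 1) ≤ h)
    (hdense : 3 ≤ n → (n - 2).choose 2 + 2 * t ≤ h) :
    t * (s + 1) + (N + 1).choose 2 ≤ h + 1 := by
  subst hn
  have hchoose := two_mul_choose_two_succ N
  obtain hNt | hNt := le_or_gt (N + 2) (2 * t)
  · have hle : t * (N + s) ≤ h := hforest
    obtain ⟨m, rfl⟩ := Nat.exists_eq_add_of_lt hN
    nlinarith [Nat.mul_le_mul_right m hNt]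
  · obtain ⟨q, rfl⟩ := Nat.exists_eq_add_of_le (show 3 ≤ s by lia)
    have hle := hdense (by lia)
    rw [show N + (3 + q) + 1 - 2 = (N + 1) + (q + 1) by lia, choose_two_add (N + 1) (q + 1)] at hle
    nlinarith [Nat.mul_le_mul_right (q + 1) (show 2 * t ≤ N + 1 by lia)]

variable {V κ ι : Type*} [Fintype V] {H R : Finset (Sym2 V)} {p : V → κ}
  {β : Sym2 V → ι} {k : κ}

lemma card_noncrossing_le [Fintype κ] (hH : ∀ e ∈ H, ¬e.IsDiag) (p : V → κ) :
    #(noncrossing H p) ≤ ∑ k, (#{x | p x = k}).choose 2 := by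
  have hsub : noncrossing H p ⊆ univ.biUnion fun k => inside H {x | p x = k} := by
    intro e he
    obtain ⟨heH, he⟩ := mem_noncrossing.1 he
    induction e with | h u w =>
    refine mem_biUnion.2 ⟨p u, mem_univ _, mem_inside.2 ⟨heH, fun v hv => ?_⟩⟩
    obtain rfl | rfl := Sym2.mem_iff.1 hv
    · exact mem_filter.2 ⟨mem_univ _, rfl⟩
    · exact mem_filter.2 ⟨mem_univ _, he.symm⟩
  exact (card_le_card hsub).trans
    (card_biUnion_le.trans (sum_le_sum fun k _ => card_inside_le hH _))

lemma card_noncrossing_le_of_ne [Fintype κ] (hH : ∀ e ∈ H, ¬e.IsDiag) (hp : Function.Surjective p)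
    {u v x y : V} (huv : u ≠ v) (hxy : x ≠ y) (hpuv : p u = p v) (hpxy : p x = p y)
    (hpux : p u ≠ p x) :
    #(noncrossing H p) ≤ (Fintype.card V - Fintype.card κ).choose 2 + 1 := by
  have hfiber : ∀ k, 0 < #{x | p x = k} := fun k => by
    obtain ⟨x, hx⟩ := hp k
    exact card_pos.2 ⟨x, mem_filter.2 ⟨mem_univ _, hx⟩⟩
  choose b hb using fun k => Nat.exists_eq_add_of_le' (Nat.succ_le_of_lt (hfiber k))
  have hpos : ∀ x y, x ≠ y → p x = p y → b (p x) ≠ 0 := by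
    intro x y hxy hpxy
    have htwo : 1 < #{z | p z = p x} := one_lt_card.2
      ⟨x, mem_filter.2 ⟨mem_univ _, rfl⟩, y, mem_filter.2 ⟨mem_univ _, hpxy.symm⟩, hxy⟩
    rw [hb] at htwo
    lia
  have hsum : ∑ k, b k = Fintype.card V - Fintype.card κ := by
    have hcard := card_eq_sum_card_fiberwise (s := univ) (t := univ) (f := p)
      fun _ _ => mem_coe.2 (mem_univ _)
    simp only [hb, sum_add_distrib, card_univ, sum_const, smul_eq_mul] at hcard
    lia
  rw [← hsum]
  refine (card_noncrossing_le hH p).trans ?_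
  simp only [hb]
  exact sum_choose_two_le_of_ne (mem_univ _) (mem_univ _) hpux (hpos u v huv hpuv)
    (hpos x y hxy hpxy)

lemma card_ne_add_one [Fintype κ] (hp : Function.Surjective p)
    (hk : ∀ x y, p x = p y → p x ≠ k → x = y) :
    #{x | p x ≠ k} + 1 = Fintype.card κ := by
  have himage : ({x | p x ≠ k} : Finset V).image p = univ.erase k := by
    ext j
    simp only [mem_image, mem_filter, mem_univ, true_and, mem_erase, and_true]
    constructor
    · rintro ⟨x, hx, rfl⟩
      exact hx
    · intro hj
      obtain ⟨x, rfl⟩ := hp j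
      exact ⟨x, hj, rfl⟩
  rw [← card_image_of_injOn fun x hx y _ hxy => hk x y hxy (mem_filter.1 hx).2, himage]
  exact card_erase_add_one (mem_univ k)

lemma crossing_eq_touching (hH : ∀ e ∈ H, ¬e.IsDiag) (hk : ∀ x y, p x = p y → p x ≠ k → x = y) :
    crossing H p = touching H {x | p x ≠ k} := by
  ext e
  rw [mem_crossing, mem_touching]
  refine and_congr_right fun he => ?_
  have hloop := hH e he
  induction e with | h u w =>
  simp only [Sym2.map_mk, Sym2.mk_isDiag_iff, mem_filter, mem_univ, true_and,
    Sym2.mem_iff] at hloop ⊢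
  have huw := hk u w
  grind

lemma exists_mem_outStar {e f : Sym2 V} (hk : ∀ x y, p x = p y → p x ≠ k → x = y)
    (he : e ∈ crossing R p) (hf : f ∈ crossing R p) (hfe : f ≠ e)
    (hmap : Sym2.map p f = Sym2.map p e) :
    ∃ v, p v ≠ k ∧ e ∈ outStar R v {x | p x ≠ k} ∧ f ∈ outStar R v {x | p x ≠ k} := by
  rw [mem_crossing] at he hf
  simp only [mem_outStar, he, hf, true_and, mem_filter, mem_univ]
  induction e with | h u w =>
  induction f with | h u' w' =>
  simp only [Sym2.map_mk, Sym2.mk_isDiag_iff, Sym2.eq_iff, Sym2.mem_iff] at he hf hfe hmap ⊢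
  have huu := hk u u'
  have hwu := hk w u'
  grind

lemma card_parallelBins_le_sum_collisions [Fintype ι] (hk : ∀ x y, p x = p y → p x ≠ k → x = y) :
    #(parallelBins p β R) ≤
      ∑ v with p v ≠ k, collisions β (outStar R v {x | p x ≠ k}) := by
  refine (card_le_card fun i hi => ?_).trans card_biUnion_le
  obtain ⟨e, he, f, hf, hfe, hβ, hmap, rfl⟩ := mem_parallelBins.1 hi
  obtain ⟨v, hv, hev, hfv⟩ := exists_mem_outStar hk he hf hfe hmap
  exact mem_biUnion.2 ⟨v, mem_filter.2 ⟨mem_univ _, hv⟩, mem_filter.2 ⟨mem_univ _,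
    one_lt_card.2 ⟨f, mem_filter.2 ⟨hfv, hβ⟩, e, mem_filter.2 ⟨hev, rfl⟩, hfe⟩⟩⟩

/-- Every set `S` of at most two vertices keeps at least `t * #S` of its edges once an edge is lost
for each bin with two edges leaving `S` from the same vertex. Only the sets whose complement is so
large that counting alone does not suffice are required to satisfy this. -/
def IsProtecting [Fintype ι] (t : ℕ) (H R : Finset (Sym2 V)) (β : Sym2 V → ι) : Prop :=
  ∀ S : Finset V, #S ≤ 2 → 2 * t + #S ≤ Fintype.card V →
    t * #S + ∑ v ∈ S, collisions β (outStar R v S) ≤ #(touching H S)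

lemma card_add_two_le_of_ne [Fintype κ] (hp : Function.Surjective p) {u v x y : V} (huv : u ≠ v)
    (hxy : x ≠ y) (hpuv : p u = p v) (hpxy : p x = p y) (hpux : p u ≠ p x) :
    Fintype.card κ + 2 ≤ Fintype.card V := by
  have hsurj : univ ⊆ ({v, y}ᶜ : Finset V).image p := by
    intro j _
    obtain ⟨z, rfl⟩ := hp j
    simp only [mem_image, mem_compl, mem_insert, mem_singleton]
    grind
  have hvy : v ≠ y := by grind
  have hle := (card_le_card hsurj).trans card_image_le
  have hcompl := card_add_card_compl ({v, y} : Finset V)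
  rw [card_pair hvy] at hcompl
  rw [card_univ] at hle
  lia

variable [Fintype κ] {t : ℕ}

lemma mul_add_le_card_crossing_of_ne (ht : 0 < t) (hH : ∀ e ∈ H, ¬e.IsDiag)
    (hforest : t * (Fintype.card V - 1) ≤ #H)
    (hdense : 3 ≤ Fintype.card V → (Fintype.card V - 2).choose 2 + 2 * t ≤ #H)
    (htn : 2 * t ≤ Fintype.card V) (hp : Function.Surjective p) {u v x y : V} (huv : u ≠ v)
    (hxy : x ≠ y) (hpuv : p u = p v) (hpxy : p x = p y) (hpux : p u ≠ p x) :
    t * Fintype.card κ ≤ #(crossing H p) + 1 := by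
  have hnoncrossing := card_noncrossing_le_of_ne hH hp huv hxy hpuv hpxy hpux
  have hsplit := card_noncrossing_add_card_crossing H p
  have hcard := card_add_two_le_of_ne hp huv hxy hpuv hpxy hpux
  have hone : 1 < Fintype.card κ := Fintype.one_lt_card_iff.2 ⟨_, _, hpux⟩
  have hle := mul_add_choose_two_le (s := Fintype.card κ - 1)
    (N := Fintype.card V - Fintype.card κ) ht (by lia) (by lia) (by lia) htn hforest hdense
  rw [Nat.sub_add_cancel hone.le] at hle
  lia

lemma mul_add_le_card_touching (hH : ∀ e ∈ H, ¬e.IsDiag)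
    (hforest : t * (Fintype.card V - 1) ≤ #H)
    (hdense : 3 ≤ Fintype.card V → (Fintype.card V - 2).choose 2 + 2 * t ≤ #H) {S : Finset V}
    (hS : #S ≤ 2 → Fintype.card V < 2 * t + #S) (hSV : #S + 1 < Fintype.card V) :
    t * (#S + 1) ≤ #(touching H S) + 1 := by
  have hle := mul_add_choose_two_succ_le (N := Fintype.card V - #S - 1) (by lia) (by lia) hS
    hforest hdense
  have htouching := card_le_card_touching_add_choose hH S
  rw [Nat.sub_add_cancel (by lia)] at hle
  lia

lemma mul_add_card_parallelBins_le_of_bijective (hH : ∀ e ∈ H, ¬e.IsDiag)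
    (hforest : t * (Fintype.card V - 1) ≤ #H) (hp : Function.Bijective p) :
    t * (Fintype.card κ - 1) + #(parallelBins p β R) ≤ #(crossing H p) := by
  rw [parallelBins_eq_empty hp.1, card_empty, add_zero, ← Fintype.card_of_bijective hp]
  refine hforest.trans (card_le_card fun e he => mem_crossing.2 ⟨he, ?_⟩)
  rw [Sym2.isDiag_map hp.1]
  exact hH e he

lemma mul_add_card_parallelBins_le_card_crossing [Fintype ι] (ht : 0 < t) (hH : ∀ e ∈ H, ¬e.IsDiag)
    (hforest : t * (Fintype.card V - 1) ≤ #H)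
    (hdense : 3 ≤ Fintype.card V → (Fintype.card V - 2).choose 2 + 2 * t ≤ #H)
    (htn : 2 * t ≤ Fintype.card V) (hβ : IsProtecting t H R β) (hcollisions : collisions β R < t)
    (hp : Function.Surjective p) :
    t * (Fintype.card κ - 1) + #(parallelBins p β R) ≤ #(crossing H p) := by
  have hparallel := card_parallelBins_le_collisions p β R
  obtain hinj | hinj := em (Function.Injective p)
  · exact mul_add_card_parallelBins_le_of_bijective hH hforest ⟨hinj, hp⟩
  obtain ⟨u, v, hpuv, huv⟩ := Function.not_injective_iff.1 hinj
  obtain ⟨x, y, hpxy, hxu, hxy⟩ | hk := em (∃ x y, p x = p y ∧ p x ≠ p u ∧ x ≠ y)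
  · have hle := mul_add_le_card_crossing_of_ne ht hH hforest hdense htn hp huv hxy hpuv hpxy
      hxu.symm
    have hmul := Nat.mul_sub_one t (Fintype.card κ)
    have hpos : t ≤ t * Fintype.card κ := Nat.le_mul_of_pos_right t
      (Fintype.card_pos_iff.2 ⟨p u⟩)
    lia
  push Not at hk
  have hcard := card_ne_add_one hp hk
  rw [crossing_eq_touching hH hk, ← hcard, Nat.add_sub_cancel]
  by_cases hS : #{x | p x ≠ p u} ≤ 2 ∧ 2 * t + #{x | p x ≠ p u} ≤ Fintype.card V
  · exact (Nat.add_le_add_left (card_parallelBins_le_sum_collisions hk) _).trans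
      (hβ _ hS.1 hS.2)
  · have hle := mul_add_le_card_touching hH hforest hdense (S := {x | p x ≠ p u}) (by lia)
      (hcard.trans_lt (Fintype.card_lt_of_surjective_not_injective p hp hinj))
    lia

end Cuts

section Protection

variable {V ι γ : Type*} [Fintype ι] {H R : Finset (Sym2 V)} {c : Sym2 V → γ} {β : Sym2 V → ι}
  {t : ℕ} {v w x y : V}

/-- Twice the degree of `v` in `H` minus its degree in `R`. If this is at least `2 * t`, then `v`
keeps `t` edges of `H` whatever the binning of `R`, as each collision at `v` uses up two edges
of `R`. -/
noncomputable def slack (H R : Finset (Sym2 V)) (v : V) : ℤ :=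
  2 * #(touching H {v}) - #(touching R {v})

lemma two_mul_collisions_add_slack_le (H R : Finset (Sym2 V)) (β : Sym2 V → ι) (v : V) :
    2 * (collisions β (touching R {v}) : ℤ) + slack H R v ≤ 2 * #(touching H {v}) := by
  have hle := two_mul_collisions_le β (touching R {v})
  rw [slack]
  lia

lemma le_sum_slack (hH : ∀ e ∈ H, ¬e.IsDiag) (hRH : R ⊆ H) (S : Finset V) :
    (2 * #(touching H S) + #(inside H S) - #R : ℤ) ≤ ∑ v ∈ S, slack H R v := by
  have hle := sum_card_touching_add_le hH hRH S
  simp only [slack, sum_sub_distrib, ← mul_sum]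
  zify at hle
  lia

lemma card_touching_add_card_touching (hH : ∀ e ∈ H, ¬e.IsDiag) (hxy : x ≠ y) :
    #(touching H {x}) + #(touching H {y}) =
      #(touching H {x, y}) + if s(x, y) ∈ H then 1 else 0 := by
  have hinside : inside H {x, y} = {e ∈ H | e = s(x, y)} := by
    ext e
    rw [mem_inside, mem_filter]
    refine and_congr_right fun he => ?_
    have hloop := hH e he
    induction e with | h u z =>
    simp only [Sym2.mk_isDiag_iff, Sym2.mem_iff, mem_insert, mem_singleton, Sym2.eq_iff,
      forall_eq_or_imp, forall_eq] at hloop ⊢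
    grind
  have hsum := sum_card_touching_singleton hH {x, y}
  rw [sum_pair hxy, hinside, filter_eq'] at hsum
  split_ifs at hsum ⊢ <;> simpa using hsum

lemma outStar_subset_touching (X : Finset (Sym2 V)) (v : V) (S : Finset V) :
    outStar X v S ⊆ touching X {v} := fun _ he =>
  mem_touching_singleton.2 ⟨(mem_outStar.1 he).1, (mem_outStar.1 he).2.1⟩

lemma outStar_singleton (X : Finset (Sym2 V)) (v : V) : outStar X v {v} = touching X {v} := by
  ext e
  simp only [mem_outStar, mem_touching_singleton, mem_singleton, implies_true, and_true, forall_eq]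

lemma outStar_pair (X : Finset (Sym2 V)) (hxy : x ≠ y) :
    outStar X x {x, y} = (touching X {x}).erase s(x, y) := by
  ext e
  simp only [mem_outStar, mem_erase, mem_touching_singleton, mem_insert, mem_singleton]
  induction e with | h u z =>
  simp only [Sym2.mem_iff, forall_eq_or_imp, forall_eq]
  grind

lemma isProtecting_of_singleton_of_pair [Fintype V]
    (hone : 2 * t + 1 ≤ Fintype.card V →
      ∀ x, t + collisions β (touching R {x}) ≤ #(touching H {x}))
    (htwo : 2 * t + 2 ≤ Fintype.card V → ∀ x y, x ≠ y →
      2 * t + collisions β (outStar R x {x, y}) + collisions β (outStar R y {x, y}) ≤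
        #(touching H {x, y})) : IsProtecting t H R β := by
  intro S hS hSV
  obtain hS | hS | hS : #S = 0 ∨ #S = 1 ∨ #S = 2 := by lia
  · rw [hS, card_eq_zero.1 hS, sum_empty]
    exact Nat.zero_le _
  · obtain ⟨x, rfl⟩ := card_eq_one.1 hS
    rw [card_singleton, mul_one, sum_singleton, outStar_singleton]
    exact hone hSV x
  · obtain ⟨x, y, hxy, rfl⟩ := card_eq_two.1 hS
    rw [card_pair hxy, sum_pair hxy, mul_comm, ← add_assoc]
    exact htwo (card_pair hxy ▸ hSV) x y hxy

lemma exists_two_le_slack_of_ne [Finite V] [Nontrivial V]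
    (htriple : ∀ S : Finset V, #S = 3 → (6 * t + #(inside H S) : ℤ) ≤ ∑ v ∈ S, slack H R v) :
    ∃ v w, v ≠ w ∧ #(touching H {v}) ≤ #(touching H {w}) ∧
      ∀ y, y ≠ v → y ≠ w → 2 * t ≤ slack H R y ∧
        ∀ x, x ≠ y → s(x, y) ∈ H → 2 * t < slack H R x ∨ 2 * t < slack H R y := by
  cases nonempty_fintype V
  have hthree : ∀ x y z, x ≠ y → x ≠ z → y ≠ z →
      (6 * t + #(inside H {x, y, z}) : ℤ) ≤ slack H R x + (slack H R y + slack H R z) := by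
    intro x y z hxy hxz hyz
    rw [← sum_pair hyz, ← sum_insert (by simp [hxy, hxz])]
    exact htriple _ (card_eq_three.2 ⟨x, y, z, hxy, hxz, hyz, rfl⟩)
  obtain ⟨v, hv⟩ := Finite.exists_min (slack H R)
  obtain ⟨u, hu⟩ := exists_ne v
  obtain ⟨w, hw, hwmin⟩ := exists_min_image (univ.erase v) (slack H R)
    ⟨u, mem_erase.2 ⟨hu, mem_univ _⟩⟩
  have hwv : w ≠ v := ne_of_mem_erase hw
  have hrest : ∀ y, y ≠ v → y ≠ w → 2 * t ≤ slack H R y ∧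
      ∀ x, x ≠ y → s(x, y) ∈ H → 2 * t < slack H R x ∨ 2 * t < slack H R y := by
    intro y hyv hyw
    have hvy := hv y
    have hwy := hwmin y (mem_erase.2 ⟨hyv, mem_univ _⟩)
    have hyvw := hthree y v w hyv hyw hwv.symm
    refine ⟨by lia, fun x hxy hxyH => ?_⟩
    have hedge : ∀ z, 0 < #(inside H {x, y, z}) := fun z =>
      card_pos.2 ⟨s(x, y), mem_inside.2 ⟨hxyH, by simp⟩⟩
    have hvx := hv x
    obtain rfl | hxv := eq_or_ne x v
    · have hxyw := hthree x y w hxy hwv.symm hyw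
      have hpos := hedge w
      lia
    · have hxyv := hthree x y v hxy hxv hyv
      have hpos := hedge v
      lia
  obtain hle | hle := le_total #(touching H {v}) #(touching H {w})
  · exact ⟨v, w, hwv.symm, hle, hrest⟩
  · exact ⟨w, v, hwv, hle, fun y hyw hyv => hrest y hyv hyw⟩

lemma two_mul_add_collisions_outStar_le (hH : ∀ e ∈ H, ¬e.IsDiag) (hxy : x ≠ y)
    (hx : t + collisions β (touching R {x}) ≤ #(touching H {x}))
    (hy : t + collisions β (touching R {y}) ≤ #(touching H {y}))
    (hslack : s(x, y) ∈ H → 2 * t < slack H R x ∨ 2 * t < slack H R y) :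
    2 * t + collisions β (outStar R x {x, y}) + collisions β (outStar R y {x, y}) ≤
      #(touching H {x, y}) := by
  have hsum := card_touching_add_card_touching hH hxy
  have hx_out := collisions_mono (β := β) (outStar_subset_touching R x {x, y})
  have hy_out := collisions_mono (β := β) (outStar_subset_touching R y {x, y})
  split_ifs at hsum with hxyH
  · have hx_slack := two_mul_collisions_add_slack_le H R β x
    have hy_slack := two_mul_collisions_add_slack_le H R β y
    obtain hstrict | hstrict := hslack hxyH <;> lia
  · lia

lemma isProtecting_of_slack [Fintype V] (hH : ∀ e ∈ H, ¬e.IsDiag)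
    (hrest : ∀ y, y ≠ v → y ≠ w → 2 * t ≤ slack H R y ∧
      ∀ x, x ≠ y → s(x, y) ∈ H → 2 * t < slack H R x ∨ 2 * t < slack H R y)
    (hv : t + collisions β (touching R {v}) ≤ #(touching H {v}))
    (hw : t + collisions β (touching R {w}) ≤ #(touching H {w}))
    (hvw : 2 * t + collisions β (outStar R v {v, w}) + collisions β (outStar R w {v, w}) ≤
      #(touching H {v, w})) : IsProtecting t H R β := by
  have hone : ∀ x, t + collisions β (touching R {x}) ≤ #(touching H {x}) := by
    intro x
    obtain rfl | hxv := eq_or_ne x v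
    · exact hv
    obtain rfl | hxw := eq_or_ne x w
    · exact hw
    have hslack := two_mul_collisions_add_slack_le H R β x
    have hle := (hrest x hxv hxw).1
    lia
  have htwo : ∀ x y, x ≠ y → y ≠ v → y ≠ w →
      2 * t + collisions β (outStar R x {x, y}) + collisions β (outStar R y {x, y}) ≤
        #(touching H {x, y}) := fun x y hxy hyv hyw =>
    two_mul_add_collisions_outStar_le hH hxy (hone x) (hone y) ((hrest y hyv hyw).2 x hxy)
  refine isProtecting_of_singleton_of_pair (fun _ => hone) fun _ x y hxy => ?_
  by_cases hy : y ≠ v ∧ y ≠ w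
  · exact htwo x y hxy hy.1 hy.2
  by_cases hx : x ≠ v ∧ x ≠ w
  · have hle := htwo y x hxy.symm hx.1 hx.2
    rw [pair_comm y x] at hle
    lia
  · obtain ⟨rfl, rfl⟩ | ⟨rfl, rfl⟩ : x = v ∧ y = w ∨ x = w ∧ y = v := by grind
    · exact hvw
    · rw [pair_comm y x] at hvw
      lia

lemma add_collisions_le_of_collisions_outStar (hH : ∀ e ∈ H, ¬e.IsDiag) (hRH : R ⊆ H)
    (hvw : v ≠ w) (hle : #(touching H {v}) ≤ #(touching H {w}))
    (hw : t ≤ #(touching H {w})) (htouch : 2 * t ≤ #(touching H {v, w}))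
    (hB : collisions β (outStar R w {v, w}) = 0 ∨
      t + collisions β (outStar R w {v, w}) ≤ #(outStar R w {v, w})) :
    t + collisions β (touching R {w}) ≤ #(touching H {w}) := by
  have hcard := card_le_card (touching_mono hRH {w})
  rw [pair_comm, outStar_pair R hvw.symm] at hB
  by_cases hmem : s(w, v) ∈ R
  · have hstar : s(w, v) ∈ touching R {w} :=
      mem_touching_singleton.2 ⟨hmem, Sym2.mem_mk_left w v⟩
    have hinsert := collisions_insert_le (β := β) s(w, v) ((touching R {w}).erase s(w, v))
    rw [insert_erase hstar] at hinsert
    have herase := card_erase_add_one hstar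
    have hsum := card_touching_add_card_touching hH hvw
    rw [if_pos (Sym2.eq_swap ▸ hRH hmem)] at hsum
    lia
  · rw [erase_eq_of_notMem fun h => hmem (mem_touching_singleton.1 h).1] at hB
    lia

lemma add_collisions_outStar_le (hH : ∀ e ∈ H, ¬e.IsDiag) (hRH : R ⊆ H)
    (hvw : v ≠ w) (hle : #(touching H {v}) ≤ #(touching H {w}))
    (hv : t ≤ #(touching H {v})) (htouch : 2 * t ≤ #(touching H {v, w}))
    (hA : collisions β (touching R {v}) = 0 ∨
      t + collisions β (touching R {v}) ≤ #(touching R {v}))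
    (hB : collisions β (outStar R w {v, w}) = 0 ∨
      t + collisions β (outStar R w {v, w}) ≤ #(outStar R w {v, w})) :
    2 * t + collisions β (outStar R v {v, w}) + collisions β (outStar R w {v, w}) ≤
      #(touching H {v, w}) := by
  have hsum := card_touching_add_card_touching hH hvw
  have hv_out := collisions_mono (β := β) (outStar_subset_touching R v {v, w})
  have hw_out := card_le_card (outStar_subset_touching R w {v, w})
  have hv_card := card_le_card (touching_mono hRH {v})
  have hw_card := card_le_card (touching_mono hRH {w})
  split_ifs at hsum with hmem
  · have hstar : ∀ x ∈ s(v, w), s(v, w) ∈ touching H {x} := fun x hx =>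
      mem_touching_singleton.2 ⟨hmem, hx⟩
    by_cases hmemR : s(v, w) ∈ R
    · have hlt : #(outStar R w {v, w}) < #(touching R {w}) := by
        rw [pair_comm, outStar_pair R hvw.symm, Sym2.eq_swap]
        exact card_erase_lt_of_mem (mem_touching_singleton.2 ⟨hmemR, Sym2.mem_mk_right v w⟩)
      lia
    · have hlt : ∀ x ∈ s(v, w), #(touching R {x}) < #(touching H {x}) := fun x hx =>
        card_lt_card ((touching_mono hRH {x}).ssubset_of_mem_notMem (hstar x hx)
          fun h => hmemR (mem_touching_singleton.1 h).1)
      have hv_lt := hlt v (Sym2.mem_mk_left v w)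
      have hw_lt := hlt w (Sym2.mem_mk_right v w)
      lia
  · lia

lemma exists_forall_ne_le_slack [Finite V] [Nonempty V]
    (hpair : ∀ S : Finset V, #S = 2 → (4 * t : ℤ) ≤ ∑ v ∈ S, slack H R v) :
    ∃ v, ∀ y, y ≠ v → 2 * t ≤ slack H R y := by
  obtain ⟨v, hv⟩ := Finite.exists_min (slack H R)
  refine ⟨v, fun y hyv => ?_⟩
  have hsum := hpair {y, v} (card_pair hyv)
  have hle := hv y
  rw [sum_pair hyv] at hsum
  lia

variable [Fintype V] {P : (Sym2 V → ι) → Prop}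

lemma le_sum_slack_of_card_eq_two (hn : Fintype.card V = 2 * t + 1) (ht : 0 < t)
    (hH : ∀ e ∈ H, ¬e.IsDiag) (hforest : t * (Fintype.card V - 1) ≤ #H) (hRH : R ⊆ H)
    (hR : #R + 2 ≤ 2 * t) {S : Finset V} (hS : #S = 2) : (4 * t : ℤ) ≤ ∑ v ∈ S, slack H R v := by
  refine le_trans ?_ (le_sum_slack hH hRH S)
  have htouch := card_le_card_touching_add_choose hH S
  obtain ⟨s, rfl⟩ := Nat.exists_eq_add_of_lt ht
  have hchoose := two_mul_choose_two_succ (2 * s)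
  rw [hS, hn, show 2 * (0 + s + 1) + 1 - 2 = 2 * s + 1 by lia] at htouch
  rw [hn, Nat.add_sub_cancel] at hforest
  have hlarge : 3 * s + 2 ≤ #(touching H S) := by nlinarith
  lia

lemma le_sum_slack_of_card_eq_three (hn : 2 * t + 2 ≤ Fintype.card V)
    (hH : ∀ e ∈ H, ¬e.IsDiag) (hdense : (Fintype.card V - 2).choose 2 + 2 * t ≤ #H) (hRH : R ⊆ H)
    (hR : #R + 2 ≤ 2 * t) {S : Finset V} (hS : #S = 3) :
    (6 * t + #(inside H S) : ℤ) ≤ ∑ v ∈ S, slack H R v := by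
  refine le_trans ?_ (le_sum_slack hH hRH S)
  have htouch := card_le_card_touching_add_choose hH S
  rw [show Fintype.card V - 2 = Fintype.card V - 3 + 1 by lia, choose_two_succ] at hdense
  rw [hS] at htouch
  lia

lemma exists_isProtecting_of_card_eq (hn : Fintype.card V = 2 * t + 1) (ht : 0 < t)
    (hH : ∀ e ∈ H, ¬e.IsDiag) (hforest : t * (Fintype.card V - 1) ≤ #H)
    (hdeg : ∀ v, t ≤ #(touching H {v})) (hRH : R ⊆ H) (hR : #R + 2 ≤ 2 * t)
    (hbinning : ∀ A ⊆ R, ∃ β, P β ∧ (collisions β A = 0 ∨ t + collisions β A ≤ #A)) :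
    ∃ β : Sym2 V → ι, P β ∧ IsProtecting t H R β := by
  have : Nonempty V := Fintype.card_pos_iff.1 (by lia)
  obtain ⟨v, hv⟩ := exists_forall_ne_le_slack fun S hS =>
    le_sum_slack_of_card_eq_two hn ht hH hforest hRH hR hS
  obtain ⟨β, hβ, hA⟩ := hbinning (touching R {v}) (filter_subset _ _)
  refine ⟨β, hβ, isProtecting_of_singleton_of_pair (fun _ y => ?_) (by lia)⟩
  have hle := card_le_card (touching_mono hRH {y})
  have hy := hdeg y
  obtain rfl | hyv := eq_or_ne y v
  · lia
  · have hslack := two_mul_collisions_add_slack_le H R β y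
    have hsafe := hv y hyv
    lia

lemma exists_isProtecting_of_le_card (hn : 2 * t + 2 ≤ Fintype.card V)
    (hH : ∀ e ∈ H, ¬e.IsDiag) (hdense : (Fintype.card V - 2).choose 2 + 2 * t ≤ #H)
    (hdeg : ∀ v, t ≤ #(touching H {v})) (hRH : R ⊆ H) (hR : #R + 2 ≤ 2 * t)
    (hbinning : ∀ A ⊆ R, ∀ B ⊆ R, Disjoint A B → ∃ β, P β ∧
      (collisions β A = 0 ∨ t + collisions β A ≤ #A) ∧
        (collisions β B = 0 ∨ t + collisions β B ≤ #B)) :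
    ∃ β : Sym2 V → ι, P β ∧ IsProtecting t H R β := by
  have : Nontrivial V := Fintype.one_lt_card_iff_nontrivial.1 (by lia)
  obtain ⟨v, w, hvw, hle, hrest⟩ := exists_two_le_slack_of_ne fun S hS =>
    le_sum_slack_of_card_eq_three hn hH hdense hRH hR hS
  have hstar : ∀ v, touching R {v} ⊆ R := fun v => filter_subset _ _
  have hdisj : Disjoint (touching R {v}) (outStar R w {v, w}) := by
    rw [disjoint_left]
    intro e hev hew
    exact hvw ((mem_outStar.1 hew).2.2 v (mem_insert_self _ _) (mem_touching_singleton.1 hev).2)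
  obtain ⟨β, hβ, hA, hB⟩ := hbinning (touching R {v}) (hstar v) (outStar R w {v, w})
    ((outStar_subset_touching R w _).trans (hstar w)) hdisj
  have htouch := card_le_card_touching_add_choose hH {v, w}
  rw [card_pair hvw] at htouch
  have hv := hdeg v
  have hv_card := card_le_card (touching_mono hRH {v})
  exact ⟨β, hβ, isProtecting_of_slack hH hrest (by lia)
    (add_collisions_le_of_collisions_outStar hH hRH hvw hle (hdeg w) (by lia) hB)
    (add_collisions_outStar_le hH hRH hvw hle hv (by lia) hA hB)⟩

theorem exists_isProtecting [DecidableEq γ] (ht : 0 < t) (htn : 2 * t ≤ Fintype.card V)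
    (hH : ∀ e ∈ H, ¬e.IsDiag) (hforest : t * (Fintype.card V - 1) ≤ #H)
    (hdense : 3 ≤ Fintype.card V → (Fintype.card V - 2).choose 2 + 2 * t ≤ #H)
    (hdeg : 2 * t < Fintype.card V → ∀ v, t ≤ #(touching H {v})) (hRH : R ⊆ H)
    (hR : #R + 2 ≤ 2 * t) (hc : ∀ k, #{e ∈ R | c e = k} ≤ t) :
    ∃ β : Sym2 V → Fin t, IsRainbowBinning c R β ∧ IsProtecting t H R β := by
  have : NeZero t := ⟨ht.ne'⟩
  have hcard : Fintype.card (Fin t) = t := Fintype.card_fin t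
  have hbinning := fun A hA B hB hAB => exists_binning (ι := Fin t) (c := c) (R := R) (A := A)
    (B := B) hA hB hAB (by lia) fun k => (hc k).trans_eq hcard.symm
  rw [hcard] at hbinning
  obtain htn | htn | htn :
      Fintype.card V = 2 * t ∨ Fintype.card V = 2 * t + 1 ∨ 2 * t + 2 ≤ Fintype.card V := by lia
  · obtain ⟨β, hβ, -⟩ := hbinning ∅ (empty_subset R) ∅ (empty_subset R) (disjoint_empty_left _)
    exact ⟨β, hβ, isProtecting_of_singleton_of_pair (by lia) (by lia)⟩
  · exact exists_isProtecting_of_card_eq htn ht hH hforest (hdeg (by lia)) hRH hR fun A hA =>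
      (hbinning A hA ∅ (empty_subset R) (disjoint_empty_right _)).imp fun _ hβ => ⟨hβ.1, hβ.2.1⟩
  · exact exists_isProtecting_of_le_card htn hH (hdense (by lia)) (hdeg (by lia)) hRH hR hbinning

end Protection

section Exchange

lemma exists_subset_card_eq_le_card_image {α γ : Type*} [DecidableEq γ] {c : α → γ} {E : Finset α}
    {h k : ℕ} (hk : k ≤ #(E.image c)) (hkh : k ≤ h) (hE : h ≤ #E) :
    ∃ H ⊆ E, #H = h ∧ k ≤ #(H.image c) := by
  obtain ⟨K, hKE, rfl⟩ := exists_subset_card_eq hk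
  have hsurj : Set.SurjOn c E K := fun a ha => mem_image.1 (hKE ha)
  obtain ⟨U, hUE, hcU, rfl⟩ := exists_subset_injOn_image_eq_of_surjOn _ _ hsurj
  rw [card_image_of_injOn hcU] at hkh ⊢
  obtain ⟨H, hUH, hHE, hH⟩ := exists_subsuperset_card_eq hUE hkh hE
  exact ⟨H, hHE, hH, card_image_of_injOn hcU ▸ card_le_card (image_subset_image hUH)⟩

variable {V γ : Type*} [DecidableEq γ] {E H : Finset (Sym2 V)} {c : Sym2 V → γ} {f : Sym2 V}
  {v : V} {k t : ℕ}

lemma exists_le_card_image_erase_insert (hf : f ∉ H) (hk : 0 < k)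
    (hkH : k ≤ #(H.image c)) (hktH : k + t ≤ #H + 1) (hv : #(touching H {v}) < t) :
    ∃ e ∈ H, v ∉ e ∧ k ≤ #(((insert f H).erase e).image c) := by
  set X : Finset (Sym2 V) := H \ touching H {v}
  have hX : ∀ {e}, e ∈ X ↔ e ∈ H ∧ v ∉ e := by
    intro e
    simp only [X, mem_sdiff, mem_touching_singleton]
    tauto
  have hcard : #(insert f X) = #X + 1 := card_insert_of_notMem fun h => hf (hX.1 h).1
  have hXcard : #X + #(touching H {v}) = #H := card_sdiff_add_card_eq_card (filter_subset _ _)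
  by_cases hinj : Set.InjOn c (insert f X : Finset (Sym2 V))
  · obtain ⟨e, he⟩ : X.Nonempty := card_pos.1 (by lia)
    refine ⟨e, (hX.1 he).1, (hX.1 he).2, ?_⟩
    have hsub : (insert f X).erase e ⊆ (insert f H).erase e :=
      erase_subset_erase _ (insert_subset_insert _ sdiff_subset)
    refine le_trans ?_ (card_le_card (image_subset_image hsub))
    rw [card_image_of_injOn (hinj.mono (coe_subset.2 (erase_subset _ _))),
      card_erase_of_mem (mem_insert_of_mem he)]
    lia
  · obtain ⟨e, g, he, hg, heg, hc⟩ : ∃ e g, e ∈ X ∧ g ∈ insert f X ∧ e ≠ g ∧ c e = c g := by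
      simp only [Set.InjOn, mem_coe, mem_insert] at hinj
      grind
    refine ⟨e, (hX.1 he).1, (hX.1 he).2, hkH.trans (card_le_card ?_)⟩
    have hgH : g ∈ (insert f H).erase e :=
      mem_erase.2 ⟨heg.symm, insert_subset_insert _ sdiff_subset hg⟩
    intro a ha
    obtain ⟨x, hx, rfl⟩ := mem_image.1 ha
    obtain rfl | hxe := eq_or_ne x e
    · exact mem_image.2 ⟨g, hgH, hc.symm⟩
    · exact mem_image_of_mem c (mem_erase.2 ⟨hxe, mem_insert_of_mem hx⟩)

lemma lt_card_touching_erase_insert {e : Sym2 V} (hf : f ∉ H) (hvf : v ∈ f) (hve : v ∉ e) :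
    #(touching H {v}) < #(touching ((insert f H).erase e) {v}) := by
  have hsub : touching H {v} ⊆ touching ((insert f H).erase e) {v} := by
    intro g hg
    rw [mem_touching_singleton] at hg ⊢
    exact ⟨mem_erase.2 ⟨fun h => hve (h ▸ hg.2), mem_insert_of_mem hg.1⟩, hg.2⟩
  refine card_lt_card (hsub.ssubset_of_mem_notMem (a := f) (mem_touching_singleton.2
    ⟨mem_erase.2 ⟨fun h => hve (h ▸ hvf), mem_insert_self f H⟩, hvf⟩) fun h => ?_)
  exact hf (mem_touching_singleton.1 h).1

lemma card_touching_le_card_touching_erase_add_one {e : Sym2 V} (f : Sym2 V) (H : Finset (Sym2 V))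
    (v : V) : #(touching H {v}) ≤ #(touching ((insert f H).erase e) {v}) + 1 := by
  refine (card_le_card fun g hg => ?_).trans (card_insert_le e _)
  rw [mem_touching_singleton] at hg
  rw [mem_insert, mem_touching_singleton, mem_erase, mem_insert]
  tauto

theorem exists_subset_forall_le_card_touching [Fintype V] {h : ℕ} (hE : ∀ e ∈ E, ¬e.IsDiag)
    (hdeg : ∀ v, t ≤ #(touching E {v})) (hdense : (Fintype.card V - 2).choose 2 + 2 * t ≤ h)
    (hk : 0 < k) (hkE : k ≤ #(E.image c)) (hkh : k ≤ h) (hkth : k + t ≤ h + 1) (hhE : h ≤ #E) :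
    ∃ H ⊆ E, #H = h ∧ k ≤ #(H.image c) ∧ ∀ v, t ≤ #(touching H {v}) := by
  obtain ⟨H₀, hH₀⟩ := exists_subset_card_eq_le_card_image hkE hkh hhE
  obtain ⟨H, ⟨hHE, rfl, hkH⟩, hmin⟩ := WellFounded.has_min
    (measure fun H : Finset (Sym2 V) => ∑ v, (t - #(touching H {v}))).wf
    {H | H ⊆ E ∧ #H = h ∧ k ≤ #(H.image c)} ⟨H₀, hH₀⟩
  refine ⟨H, hHE, rfl, hkH, fun v => ?_⟩
  by_contra! hv
  obtain ⟨f, hfE, hfH⟩ := exists_mem_notMem_of_card_lt_card (hv.trans_le (hdeg v))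
  obtain ⟨hfE, hvf⟩ := mem_touching_singleton.1 hfE
  replace hfH : f ∉ H := fun h => hfH (mem_touching_singleton.2 ⟨h, hvf⟩)
  obtain ⟨e, he, hve, hkH'⟩ := exists_le_card_image_erase_insert hfH hk hkH hkth hv
  refine hmin ((insert f H).erase e)
    ⟨(erase_subset _ _).trans (insert_subset hfE hHE), ?_, hkH'⟩ ?_
  · rw [card_erase_of_mem (mem_insert_of_mem he), card_insert_of_notMem hfH, Nat.add_sub_cancel]
  · have hgain := lt_card_touching_erase_insert hfH hvf hve
    change ∑ x, (t - #(touching ((insert f H).erase e) {x})) < ∑ x, (t - #(touching H {x}))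
    refine sum_lt_sum (fun x _ => ?_) ⟨v, mem_univ v, by lia⟩
    obtain rfl | hxv := eq_or_ne x v
    · lia
    have hloss := card_touching_le_card_touching_erase_add_one (e := e) f H x
    have htouch := card_le_card_touching_add_choose (fun e he => hE e (hHE he)) {x, v}
    have hsum := card_touching_add_card_touching (fun e he => hE e (hHE he)) hxv
    rw [card_pair hxv] at htouch
    lia

end Exchange

section Bounds

variable {V : Type} [Fintype V] {G : SimpleGraph V} {t : ℕ}

lemma not_isDiag_of_mem_edgeFinset {e : Sym2 V} (he : e ∈ G.edgeFinset) : ¬e.IsDiag :=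
  G.not_isDiag_of_mem_edgeSet (SimpleGraph.mem_edgeFinset.1 he)

lemma card_touching_edgeFinset_singleton (G : SimpleGraph V) (v : V) :
    #(touching G.edgeFinset {v}) = G.degree v := by
  rw [← SimpleGraph.card_incidenceFinset_eq_degree]
  congr 1
  ext e
  rw [mem_touching_singleton, SimpleGraph.mem_incidenceFinset, SimpleGraph.incidenceSet,
    SimpleGraph.mem_edgeFinset, Set.mem_sep_iff]

theorem hasRainbowSpanningTrees_of_card_le_card_image_add {c : Sym2 V → ℕ} {H : Finset (Sym2 V)}
    (ht : 0 < t) (htn : 2 * t ≤ Fintype.card V) (hHG : H ⊆ G.edgeFinset)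
    (hforest : t * (Fintype.card V - 1) ≤ #H)
    (hdense : 3 ≤ Fintype.card V → (Fintype.card V - 2).choose 2 + 2 * t ≤ #H)
    (hdeg : 2 * t < Fintype.card V → ∀ v, t ≤ #(touching H {v}))
    (hcolors : #H + 1 ≤ #(H.image c) + t) : HasRainbowSpanningTrees G c t := by
  have : Nonempty V := Fintype.card_pos_iff.1 (by lia)
  have hH : ∀ e ∈ H, ¬e.IsDiag := fun e he => not_isDiag_of_mem_edgeFinset (hHG he)
  set R := repeated c H
  have hRH : R ⊆ H := repeated_subset c H
  have hR : #R + 2 ≤ 2 * t := by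
    have := card_repeated_add_two_mul_card_image_le c H
    lia
  have hclass : ∀ k, #{e ∈ R | c e = k} ≤ t := by
    intro k
    have hmono := card_le_card (filter_subset_filter (fun e => c e = k) hRH)
    have := card_filter_eq_add_card_image_le c H k
    lia
  obtain ⟨β, ⟨hβcard, hβc⟩, hβ⟩ :=
    exists_isProtecting ht htn hH hforest hdense hdeg hRH hR hclass
  have hcollisions : collisions β R < t := by
    have := two_mul_collisions_le β R
    lia
  have hHE : (H : Set (Sym2 V)) ⊆ G.edgeSet := fun e he => SimpleGraph.mem_edgeFinset.1 (hHG he)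
  have hbin : ∀ i, ({e ∈ R | β e = i} : Finset (Sym2 V)) ⊆ R := fun i => filter_subset _ R
  refine hasRainbowSpanningTrees_of_forall_surjective (S := H \ R) (F := fun i => {e ∈ R | β e = i})
    (Set.Subset.trans (coe_subset.2 sdiff_subset) hHE)
    (fun i => Set.Subset.trans (coe_subset.2 ((hbin i).trans hRH)) hHE)
    (fun i => disjoint_sdiff_self_left.mono_right (hbin i))
    (fun i j hij => disjoint_filter.2 fun e _ hi hj => hij (hi.symm.trans hj))
    (injOn_sdiff_repeated_union_bin hβc) fun κ _ p hp => ?_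
  have hcut := mul_add_card_parallelBins_le_card_crossing ht hH hforest hdense htn hβ hcollisions hp
  have hcross := card_crossing_le_add_card_parallelBins hβcard H p
  lia

theorem antiRamsey_le_of_forall_le_degree {m : ℕ} (ht : 0 < t) (htn : 2 * t ≤ Fintype.card V)
    (hdeg : ∀ v, t ≤ G.degree v) (hforest : t * (Fintype.card V - 2) ≤ m)
    (hdense : 3 ≤ Fintype.card V → (Fintype.card V - 2).choose 2 + t ≤ m)
    (hm : m + t ≤ #G.edgeFinset) : antiRamsey G t ≤ m := by
  refine antiRamsey_le fun c hc => ?_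
  obtain ⟨H, hHG, hH, hcH, hHdeg⟩ : ∃ H ⊆ G.edgeFinset, #H = m + t ∧ m + 1 ≤ #(H.image c) ∧
      (2 * t < Fintype.card V → ∀ v, t ≤ #(touching H {v})) := by
    obtain hlt | heq := htn.lt_or_eq
    · obtain ⟨H, hHG, hH, hcH, hHdeg⟩ := exists_subset_forall_le_card_touching
        (fun e he => not_isDiag_of_mem_edgeFinset he)
        (fun v => (card_touching_edgeFinset_singleton G v).symm ▸ hdeg v) (h := m + t)
        (by have := hdense (by lia); lia) m.succ_pos hc (by lia) (by lia) hm
      exact ⟨H, hHG, hH, hcH, fun _ => hHdeg⟩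
    · obtain ⟨H, hHG, hH, hcH⟩ := exists_subset_card_eq_le_card_image hc (by lia) hm
      exact ⟨H, hHG, hH, hcH, fun hlt => absurd heq hlt.ne⟩
  refine hasRainbowSpanningTrees_of_card_le_card_image_add ht htn hHG ?_ ?_ hHdeg ?_
  · obtain ⟨k, hk⟩ : ∃ k, Fintype.card V = k + 2 := ⟨Fintype.card V - 2, by lia⟩
    simp only [hk, Nat.add_sub_cancel, Nat.reduceSubDiff, hH] at hforest ⊢
    linarith
  · intro h
    have := hdense h
    lia
  · lia

lemma card_edgeFinset_add_le_antiRamsey_add_card_touching {x y : V} (ht : 0 < t) (hxy : x ≠ y)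
    (hV : 3 ≤ Fintype.card V) (hxyt : t ≤ #(touching G.edgeFinset {x, y})) :
    #G.edgeFinset + t ≤ antiRamsey G t + #(touching G.edgeFinset {x, y}) := by
  obtain ⟨z, hz⟩ : ∃ z, z ∉ ({x, y} : Finset V) := by
    by_contra! h
    have := card_le_card (subset_iff.2 fun z (_ : z ∈ univ) => h z)
    rw [card_univ, card_pair hxy] at this
    lia
  set p : V → Fin 3 := fun v => if v = x then 0 else if v = y then 1 else 2
  have hp : Function.Surjective p := by
    intro k
    simp only [mem_insert, mem_singleton, not_or] at hz
    fin_cases k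
    · exact ⟨x, if_pos rfl⟩
    · exact ⟨y, (if_neg hxy.symm).trans (if_pos rfl)⟩
    · exact ⟨z, (if_neg hz.1).trans (if_neg hz.2)⟩
  have hcross : crossing G.edgeFinset p = touching G.edgeFinset {x, y} := by
    ext e
    rw [mem_crossing, mem_touching]
    refine and_congr_right fun he => ?_
    have hne := not_isDiag_of_mem_edgeFinset he
    induction e with | h u w =>
    simp only [Sym2.map_mk, Sym2.mk_isDiag_iff, mem_insert, mem_singleton, Sym2.mem_iff,
      exists_eq_or_imp, exists_eq_left, p] at hne ⊢
    grind
  have hlow := card_noncrossing_add_le_antiRamsey (G := G) (t := t) hp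
  have hsum := card_noncrossing_add_card_crossing G.edgeFinset p
  simp only [Fintype.card_fin, Nat.reduceSub, mul_one, hcross] at hlow hsum
  have := hlow ht hxyt
  lia

lemma mul_card_sub_two_le_antiRamsey (hpos : 0 < t * (Fintype.card V - 2))
    (hle : t * (Fintype.card V - 2) ≤ #G.edgeFinset) :
    t * (Fintype.card V - 2) ≤ antiRamsey G t := by
  have hcross : crossing G.edgeFinset id = G.edgeFinset :=
    filter_true_of_mem fun e he => by
      rw [Sym2.map_id]
      exact not_isDiag_of_mem_edgeFinset he
  exact le_trans (Nat.le_add_left _ _)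
    (card_noncrossing_add_le_antiRamsey (p := id) Function.surjective_id hpos (hcross.symm ▸ hle))

end Bounds

section Complete

variable {V : Type} [Fintype V] {G : SimpleGraph V} {t : ℕ}

-- These lemmas take `G = ⊤` as a hypothesis: instance search at `⊤` itself would not find the
-- classical `Fintype` instances that `antiRamsey` carries.
lemma degree_of_eq_top (hG : G = ⊤) (v : V) : G.degree v = Fintype.card V - 1 := by
  subst hG
  convert SimpleGraph.complete_graph_degree v

lemma card_edgeFinset_of_eq_top (hG : G = ⊤) : #G.edgeFinset = (Fintype.card V).choose 2 := by
  subst hG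
  convert SimpleGraph.card_edgeFinset_top_eq_card_choose_two (V := V)

lemma card_touching_pair_of_eq_top (hG : G = ⊤) {x y : V} (hxy : x ≠ y) :
    #(touching G.edgeFinset {x, y}) = 2 * Fintype.card V - 3 := by
  have hadj : s(x, y) ∈ G.edgeFinset := SimpleGraph.mem_edgeFinset.2 (by rwa [hG])
  have hsum := card_touching_add_card_touching
    (fun e (he : e ∈ G.edgeFinset) => not_isDiag_of_mem_edgeFinset he) hxy
  rw [card_touching_edgeFinset_singleton, card_touching_edgeFinset_singleton, degree_of_eq_top hG,
    degree_of_eq_top hG, if_pos hadj] at hsum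
  lia

lemma choose_two_eq_choose_two_sub_two_add {n : ℕ} (hn : 2 ≤ n) :
    n.choose 2 = (n - 2).choose 2 + (2 * n - 3) := by
  obtain ⟨k, rfl⟩ := Nat.exists_eq_add_of_le' hn
  rw [choose_two_succ, choose_two_succ, Nat.add_sub_cancel]
  lia

lemma choose_two_two_mul (n : ℕ) : (2 * n).choose 2 = n * (2 * n - 1) := by
  rw [Nat.choose_two_right, mul_assoc, Nat.mul_div_cancel_left _ two_pos]

lemma mul_sub_one_le_choose_two {n : ℕ} (hn : 2 * t ≤ n) : t * (n - 1) ≤ n.choose 2 := by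
  rw [Nat.choose_two_right, Nat.le_div_iff_mul_le two_pos, mul_comm, ← mul_assoc]
  exact Nat.mul_le_mul_right _ hn

lemma antiRamsey_top_le {m : ℕ} (ht : 0 < t) (htn : 2 * t ≤ Fintype.card V)
    (hforest : t * (Fintype.card V - 2) ≤ m)
    (hdense : 3 ≤ Fintype.card V → (Fintype.card V - 2).choose 2 + t ≤ m)
    (hm : m + t ≤ (Fintype.card V).choose 2) : antiRamsey (⊤ : SimpleGraph V) t ≤ m := by
  generalize hG : (⊤ : SimpleGraph V) = G
  refine antiRamsey_le_of_forall_le_degree ht htn (fun v => ?_) hforest hdense ?_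
  · rw [degree_of_eq_top hG.symm]
    lia
  · rwa [card_edgeFinset_of_eq_top hG.symm]

lemma choose_two_sub_two_add_le_antiRamsey_top (ht : 0 < t) (hV : 3 ≤ Fintype.card V)
    (htV : t + 3 ≤ 2 * Fintype.card V) :
    (Fintype.card V - 2).choose 2 + t ≤ antiRamsey (⊤ : SimpleGraph V) t := by
  generalize hG : (⊤ : SimpleGraph V) = G
  obtain ⟨x, y, hxy⟩ := Fintype.one_lt_card_iff.1 (show 1 < Fintype.card V by lia)
  have hlow := card_edgeFinset_add_le_antiRamsey_add_card_touching (G := G) ht hxy hV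
  rw [card_touching_pair_of_eq_top hG.symm hxy, card_edgeFinset_of_eq_top hG.symm,
    choose_two_eq_choose_two_sub_two_add (by lia)] at hlow
  lia

lemma mul_sub_two_le_antiRamsey_top (hpos : 0 < t * (Fintype.card V - 2))
    (htV : 2 * t ≤ Fintype.card V) :
    t * (Fintype.card V - 2) ≤ antiRamsey (⊤ : SimpleGraph V) t := by
  generalize hG : (⊤ : SimpleGraph V) = G
  refine mul_card_sub_two_le_antiRamsey hpos ?_
  rw [card_edgeFinset_of_eq_top hG.symm]
  exact (Nat.mul_le_mul_left t (by lia)).trans (mul_sub_one_le_choose_two htV)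

theorem antiRamsey_top_eq_max (ht : 0 < t) (htn : 2 * t ≤ Fintype.card V)
    (hV : 3 ≤ Fintype.card V) : antiRamsey (⊤ : SimpleGraph V) t =
      max ((Fintype.card V - 2).choose 2 + t) (t * (Fintype.card V - 2)) := by
  have hforest : t * (Fintype.card V - 2) + t ≤ (Fintype.card V).choose 2 := by
    rw [← mul_add_one, show Fintype.card V - 2 + 1 = Fintype.card V - 1 by lia]
    exact mul_sub_one_le_choose_two htn
  have hdense := choose_two_eq_choose_two_sub_two_add (n := Fintype.card V) (by lia)
  exact le_antisymm
    (antiRamsey_top_le ht htn (le_max_right _ _) (fun _ => le_max_left _ _) (by lia))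
    (max_le (choose_two_sub_two_add_le_antiRamsey_top ht hV (by lia))
      (mul_sub_two_le_antiRamsey_top (Nat.mul_pos ht (by lia)) htn))

theorem antiRamsey_top_eq_choose_two_add (ht : 0 < t) (htn : 2 * t + 2 ≤ Fintype.card V) :
    antiRamsey (⊤ : SimpleGraph V) t = (Fintype.card V - 2).choose 2 + t := by
  rw [antiRamsey_top_eq_max ht (by lia) (by lia), max_eq_left]
  obtain ⟨k, hk⟩ : ∃ k, Fintype.card V = k + 3 := ⟨Fintype.card V - 3, by lia⟩
  have hchoose := two_mul_choose_two_succ k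
  simp only [hk, Nat.reduceSubDiff] at htn ⊢
  nlinarith

theorem antiRamsey_top_eq_mul (ht : 0 < t) (htn : 2 * t ≤ Fintype.card V)
    (hnt : Fintype.card V ≤ 2 * t + 1) :
    antiRamsey (⊤ : SimpleGraph V) t = t * (Fintype.card V - 2) := by
  obtain hV | hV := Nat.lt_or_ge 2 (Fintype.card V)
  · rw [antiRamsey_top_eq_max ht htn hV, max_eq_right]
    obtain ⟨k, hk⟩ : ∃ k, Fintype.card V = k + 3 := ⟨Fintype.card V - 3, by lia⟩
    have hchoose := two_mul_choose_two_succ k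
    simp only [hk, Nat.reduceSubDiff] at htn hnt ⊢
    nlinarith
  · obtain rfl : t = 1 := by lia
    have hV : Fintype.card V = 2 := by lia
    refine Nat.le_antisymm (antiRamsey_top_le ht htn le_rfl (by lia) ?_) ?_ <;> simp [hV]

theorem antiRamsey_top_eq_choose_two (h : Fintype.card V < 2 * t) :
    antiRamsey (⊤ : SimpleGraph V) t = (Fintype.card V).choose 2 := by
  generalize hG : (⊤ : SimpleGraph V) = G
  rw [← card_edgeFinset_of_eq_top hG.symm]
  obtain hV | hV := Nat.lt_or_ge 1 (Fintype.card V)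
  · refine antiRamsey_eq_card_edgeFinset ?_
    rw [card_edgeFinset_of_eq_top hG.symm]
    obtain ⟨k, hk⟩ : ∃ k, Fintype.card V = k + 2 := ⟨Fintype.card V - 2, by lia⟩
    have hchoose := two_mul_choose_two_succ (k + 1)
    simp only [hk, Nat.reduceSubDiff] at h ⊢
    nlinarith
  · refine Nat.le_antisymm (antiRamsey_le_card_edgeFinset G t) ?_
    rw [card_edgeFinset_of_eq_top hG.symm, Nat.choose_eq_zero_of_lt (by lia)]
    exact Nat.zero_le _

end Complete

/-- The anti-Ramsey number of `t` edge-disjoint rainbow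
spanning trees in the complete graph `K_n`. -/
theorem stmt2 (n t : ℕ) (hn : 0 < n) (ht : 0 < t) :
    (2 * t + 2 ≤ n → antiRamsey (⊤ : SimpleGraph (Fin n)) t = (n - 2).choose 2 + t) ∧
    (n = 2 * t + 1 → antiRamsey (⊤ : SimpleGraph (Fin n)) t = (n - 1).choose 2) ∧
    (n = 2 * t → antiRamsey (⊤ : SimpleGraph (Fin n)) t = n.choose 2 - t) ∧
    (n < 2 * t → antiRamsey (⊤ : SimpleGraph (Fin n)) t = n.choose 2) := by
  have hlarge := antiRamsey_top_eq_choose_two_add (V := Fin n) ht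
  have hmiddle := antiRamsey_top_eq_mul (V := Fin n) ht
  have hsmall := antiRamsey_top_eq_choose_two (V := Fin n) (t := t)
  rw [Fintype.card_fin] at hlarge hmiddle hsmall
  refine ⟨hlarge, fun h => ?_, fun h => ?_, hsmall⟩
  · subst h
    rw [hmiddle (by lia) le_rfl, Nat.add_sub_cancel, choose_two_two_mul]
    rfl
  · subst h
    rw [hmiddle le_rfl (by lia), choose_two_two_mul, ← Nat.mul_sub_one t (2 * t - 1),
      Nat.sub_sub]
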